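/- Let λ > 0 and assume h is nonnegative and convex and satisfies the stated limit conditions. Then the modified functional Î attains its infimum over 𝒜_λ: there exists r* ∈ 𝒜_λ with Î(r*) ≤ Î(r) for all r ∈ 𝒜_λ, and inf_{𝒜_λ} Î is a real number. -/

import Mathlib

open Real MeasureTheory Filter Set
open scoped ENNReal NNReal

noncomputable section

/-- Radial stored energy `Φ(q, v, …, v) = (κ/n)(qⁿ + (n−1)vⁿ) + h(q v^{n−1})`,
the restriction of `Φ(v₁,…,vₙ) = (κ/n)(v₁ⁿ+⋯+vₙⁿ) + h(v₁⋯vₙ)` to points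
`(q, v, …, v)`. -/
def Phi (n : ℕ) (κ : ℝ) (h : ℝ → ℝ) (q v : ℝ) : ℝ :=
  (κ / n) * (q ^ n + ((n : ℝ) - 1) * v ^ n) + h (q * v ^ (n - 1))

/-- `Φ_{,1}(q, v, …, v) = κ q^{n−1} + v^{n−1} h'(q v^{n−1})`. -/
def Phi1 (n : ℕ) (κ : ℝ) (h' : ℝ → ℝ) (q v : ℝ) : ℝ :=
  κ * q ^ (n - 1) + v ^ (n - 1) * h' (q * v ^ (n - 1))

/-- `Φ_{,2}(q, v, …, v) = κ v^{n−1} + q v^{n−2} h'(q v^{n−1})`. -/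
def Phi2 (n : ℕ) (κ : ℝ) (h' : ℝ → ℝ) (q v : ℝ) : ℝ :=
  κ * v ^ (n - 1) + q * v ^ (n - 2) * h' (q * v ^ (n - 1))

/-- Radial Cauchy stress `T(q,v) = v^{1−n} Φ_{,1}(q,v,…,v) = κ(q/v)^{n−1} + h'(q v^{n−1})`. -/
def Tstress (n : ℕ) (κ : ℝ) (h' : ℝ → ℝ) (q v : ℝ) : ℝ :=
  κ * (q / v) ^ (n - 1) + h' (q * v ^ (n - 1))

/-- The determinant function `δ(R) = r'(R) (r(R)/R)^{n−1}`. -/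
def del (n : ℕ) (r r' : ℝ → ℝ) (R : ℝ) : ℝ :=
  r' R * (r R / R) ^ (n - 1)

/-- Hypotheses on `h : (0,∞) → [0,∞)`: it is `C²` with derivative `h'` and second
derivative `h''`, `h'' > 0`, `h(d) → ∞` as `d → 0⁺`, `h(d)/d → ∞` as `d → ∞`,
`h'(d) → −∞` as `d → 0⁺` and `h'(d) → ∞` as `d → ∞`. -/
structure GoodH (h h' h'' : ℝ → ℝ) : Prop where
  nonneg : ∀ d : ℝ, 0 < d → 0 ≤ h d
  deriv1 : ∀ d : ℝ, 0 < d → HasDerivAt h (h' d) d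
  deriv2 : ∀ d : ℝ, 0 < d → HasDerivAt h' (h'' d) d
  cont2 : ContinuousOn h'' (Set.Ioi 0)
  hpp_pos : ∀ d : ℝ, 0 < d → 0 < h'' d
  lim_zero : Tendsto h (nhdsWithin 0 (Set.Ioi 0)) atTop
  lim_growth : Tendsto (fun d => h d / d) atTop atTop
  dlim_zero : Tendsto h' (nhdsWithin 0 (Set.Ioi 0)) atBot
  dlim_top : Tendsto h' atTop atTop

/-- `r ∈ C²((0,1])`, with `r, r' > 0` on `(0,1]`, solving the radial equilibrium
equation `(d/dR)[R^{n−1} Φ_{,1}(r(R))] = (n−1) R^{n−2} Φ_{,2}(r(R))`. -/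
structure RadialSol (n : ℕ) (κ : ℝ) (h' : ℝ → ℝ) (r r' r'' : ℝ → ℝ) : Prop where
  pos : ∀ R ∈ Set.Ioc (0:ℝ) 1, 0 < r R
  derivPos : ∀ R ∈ Set.Ioc (0:ℝ) 1, 0 < r' R
  hasDeriv : ∀ R ∈ Set.Ioc (0:ℝ) 1, HasDerivWithinAt r (r' R) (Set.Ioc 0 1) R
  hasDeriv2 : ∀ R ∈ Set.Ioc (0:ℝ) 1, HasDerivWithinAt r' (r'' R) (Set.Ioc 0 1) R
  cont2 : ContinuousOn r'' (Set.Ioc 0 1)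
  equil : ∀ R ∈ Set.Ioc (0:ℝ) 1,
    HasDerivWithinAt (fun s => s ^ (n - 1) * Phi1 n κ h' (r' s) (r s / s))
      (((n : ℝ) - 1) * R ^ (n - 2) * Phi2 n κ h' (r' R) (r R / R)) (Set.Ioc 0 1) R


/-- Modified radial stored energy
`Φ̂(q,v,…,v) = (κ/n)qⁿ + h(q v^{n−1}) + κ q v^{n−1}((n−1)/n + ln(v^{n−1}))`. -/
def PhiHat (n : ℕ) (κ : ℝ) (h : ℝ → ℝ) (q v : ℝ) : ℝ :=
  (κ / n) * q ^ n + h (q * v ^ (n - 1)) +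
    κ * (q * v ^ (n - 1)) * (((n : ℝ) - 1) / n + ((n : ℝ) - 1) * Real.log v)

/-- `Φ̂_{,1}(q,v,…,v) = κ q^{n−1} + v^{n−1} h'(q v^{n−1}) + κ v^{n−1}((n−1)/n + (n−1) ln v)`. -/
def PhiHat1 (n : ℕ) (κ : ℝ) (h' : ℝ → ℝ) (q v : ℝ) : ℝ :=
  κ * q ^ (n - 1) + v ^ (n - 1) * h' (q * v ^ (n - 1)) +
    κ * v ^ (n - 1) * (((n : ℝ) - 1) / n + ((n : ℝ) - 1) * Real.log v)

/-- `Φ̂_{,2}(q,v,…,v) = q v^{n−2}(h'(q v^{n−1}) + κ + κ(n−1)(1/n + ln v))`. -/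
def PhiHat2 (n : ℕ) (κ : ℝ) (h' : ℝ → ℝ) (q v : ℝ) : ℝ :=
  q * v ^ (n - 2) *
    (h' (q * v ^ (n - 1)) + κ + κ * (((n : ℝ) - 1) * (1 / n + Real.log v)))

/-- Modified radial Cauchy stress
`T̂(q,v) = κ(q/v)^{n−1} + h'(q v^{n−1}) + (n−1)κ(1/n + ln v)`. -/
def THat (n : ℕ) (κ : ℝ) (h' : ℝ → ℝ) (q v : ℝ) : ℝ :=
  κ * (q / v) ^ (n - 1) + h' (q * v ^ (n - 1)) +
    ((n : ℝ) - 1) * κ * (1 / n + Real.log v)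

/-- `r ∈ C²((0,1])`, with `r, r' > 0` on `(0,1]`, solving the modified radial
equilibrium equation `(d/dR)[R^{n−1} Φ̂_{,1}(r(R))] = (n−1) R^{n−2} Φ̂_{,2}(r(R))`. -/
structure ModRadialSol (n : ℕ) (κ : ℝ) (h' : ℝ → ℝ) (r r' r'' : ℝ → ℝ) : Prop where
  pos : ∀ R ∈ Set.Ioc (0:ℝ) 1, 0 < r R
  derivPos : ∀ R ∈ Set.Ioc (0:ℝ) 1, 0 < r' R
  hasDeriv : ∀ R ∈ Set.Ioc (0:ℝ) 1, HasDerivWithinAt r (r' R) (Set.Ioc 0 1) R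
  hasDeriv2 : ∀ R ∈ Set.Ioc (0:ℝ) 1, HasDerivWithinAt r' (r'' R) (Set.Ioc 0 1) R
  cont2 : ContinuousOn r'' (Set.Ioc 0 1)
  equil : ∀ R ∈ Set.Ioc (0:ℝ) 1,
    HasDerivWithinAt (fun s => s ^ (n - 1) * PhiHat1 n κ h' (r' s) (r s / s))
      (((n : ℝ) - 1) * R ^ (n - 2) * PhiHat2 n κ h' (r' R) (r R / R)) (Set.Ioc 0 1) R


/-- The admissible set `𝒜_λ`: `r ∈ W^{1,1}(0,1)` (absolutely continuous with
integrable derivative `r'`), `r(1) = λ`, `r' > 0` a.e. in `(0,1)` and `r(0) ≥ 0`. -/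
structure Adm (lam : ℝ) (r r' : ℝ → ℝ) : Prop where
  intg : IntegrableOn r' (Set.Ioc 0 1)
  ftc : ∀ R ∈ Set.Icc (0:ℝ) 1, r R = r 0 + ∫ t in Set.Ioc 0 R, r' t
  derivPos : ∀ᵐ R ∂(volume.restrict (Set.Ioc (0:ℝ) 1)), 0 < r' R
  bc : r 1 = lam
  c0 : 0 ≤ r 0

/-- The modified energy functional `Î`, valued in `EReal` (it is the integral of
`R^{n−1} Φ̂(r'(R), r(R)/R, …, r(R)/R)` minus `(κ(n−1)/n) λⁿ ln λ`, the integral being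
defined as the difference of the lower integrals of the positive and negative parts). -/
def IHatE (n : ℕ) (κ lam : ℝ) (h : ℝ → ℝ) (r r' : ℝ → ℝ) : EReal :=
  (((∫⁻ R in Set.Ioc (0:ℝ) 1,
      ENNReal.ofReal (R ^ (n - 1) * PhiHat n κ h (r' R) (r R / R))) : ℝ≥0∞) : EReal)
  - (((∫⁻ R in Set.Ioc (0:ℝ) 1,
      ENNReal.ofReal (-(R ^ (n - 1) * PhiHat n κ h (r' R) (r R / R)))) : ℝ≥0∞) : EReal)
  - ((κ * ((n : ℝ) - 1) / n * lam ^ n * Real.log lam : ℝ) : EReal)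


/-! ### A convex energy depending on a density and its cumulative integral -/

/-- Tangent-line inequality for `t ↦ t ^ (p + 1)`. -/
lemma pow_succ_tangent_le (p : ℕ) {s t : ℝ} (hs : 0 ≤ s) (ht : 0 ≤ t) :
    (p + 1) * s ^ p * t - p * s ^ (p + 1) ≤ t ^ (p + 1) := by
  induction p with
  | zero => simp
  | succ p ih =>
    have h1 := mul_le_mul_of_nonneg_left ih ht
    have h2 : 0 ≤ (p + 1) * s ^ p * (t - s) ^ 2 := by positivity
    push_cast
    ring_nf at h1 h2 ⊢
    linarith

/-- Tangent-plane inequality for the perspective function `(x, y) ↦ x ^ (p + 1) / y ^ p`. -/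
lemma perspective_tangent_le (p : ℕ) {s x y : ℝ} (hs : 0 ≤ s) (hx : 0 ≤ x) (hy : 0 < y) :
    (p + 1) * s ^ p * x - p * s ^ (p + 1) * y ≤ x ^ (p + 1) / y ^ p := by
  have h1 := mul_le_mul_of_nonneg_left (pow_succ_tangent_le p hs (div_nonneg hx hy.le)) hy.le
  have h2 : y * (x / y) ^ (p + 1) = x ^ (p + 1) / y ^ p := by
    rw [div_pow, pow_succ y]; field_simp
  have h3 : y * ((p + 1) * s ^ p * (x / y) - p * s ^ (p + 1)) =
      (p + 1) * s ^ p * x - p * s ^ (p + 1) * y := by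
    field_simp
  linarith

lemma perspective_midpoint_le (p : ℕ) {x₁ x₂ y₁ y₂ : ℝ} (hx₁ : 0 ≤ x₁) (hx₂ : 0 ≤ x₂)
    (hy₁ : 0 < y₁) (hy₂ : 0 < y₂) :
    2 * (((x₁ + x₂) / 2) ^ (p + 1) / ((y₁ + y₂) / 2) ^ p) ≤
      x₁ ^ (p + 1) / y₁ ^ p + x₂ ^ (p + 1) / y₂ ^ p := by
  set X := (x₁ + x₂) / 2 with hX
  set Y := (y₁ + y₂) / 2 with hY
  have hYpos : 0 < Y := by positivity
  have hs : 0 ≤ X / Y := by positivity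
  have h1 := perspective_tangent_le p hs hx₁ hy₁
  have h2 := perspective_tangent_le p hs hx₂ hy₂
  have e1 : x₁ + x₂ = 2 * X := by rw [hX]; ring
  have e2 : y₁ + y₂ = 2 * Y := by rw [hY]; ring
  have h3 : X ^ (p + 1) / Y ^ p = (p + 1) * (X / Y) ^ p * X - p * (X / Y) ^ (p + 1) * Y := by
    clear_value X Y
    rw [div_pow, div_pow, pow_succ X, pow_succ Y]; field_simp; ring
  rw [h3]
  have h4 : (p + 1) * (X / Y) ^ p * x₁ + (p + 1) * (X / Y) ^ p * x₂ =
      (p + 1) * (X / Y) ^ p * (2 * X) := by rw [← e1]; ring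
  have h5 : p * (X / Y) ^ (p + 1) * y₁ + p * (X / Y) ^ (p + 1) * y₂ =
      p * (X / Y) ^ (p + 1) * (2 * Y) := by rw [← e2]; ring
  linarith

/-- The conditions on the volumetric energy used by the direct method: it is nonnegative,
continuous and strictly convex on `(0, ∞)`, blows up at `0⁺` and is superlinear at `∞`. -/
structure VolumetricEnergy (h : ℝ → ℝ) : Prop where
  nonneg : ∀ d : ℝ, 0 < d → 0 ≤ h d
  cont : ContinuousOn h (Ioi 0)
  strictConvex : StrictConvexOn ℝ (Ioi 0) h
  lim_zero : Tendsto h (nhdsWithin 0 (Ioi 0)) atTop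
  lim_growth : Tendsto (fun d => h d / d) atTop atTop

/-- Twice the midpoint convexity defect of `h`. -/
def convexityGap (h : ℝ → ℝ) (a b : ℝ) : ℝ := h a + h b - 2 * h ((a + b) / 2)

namespace VolumetricEnergy

variable {h : ℝ → ℝ}

lemma convexityGap_pos (H : VolumetricEnergy h) {a b : ℝ} (ha : 0 < a) (hb : 0 < b)
    (hab : a ≠ b) : 0 < convexityGap h a b := by
  have := H.strictConvex.2 (mem_Ioi.2 ha) (mem_Ioi.2 hb) hab
    (by norm_num : (0 : ℝ) < 1 / 2) (by norm_num : (0 : ℝ) < 1 / 2) (by norm_num)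
  simp only [smul_eq_mul] at this
  rw [show 1 / 2 * a + 1 / 2 * b = (a + b) / 2 by ring] at this
  unfold convexityGap
  linarith

lemma convexityGap_nonneg (H : VolumetricEnergy h) {a b : ℝ} (ha : 0 < a) (hb : 0 < b) :
    0 ≤ convexityGap h a b := by
  rcases eq_or_ne a b with rfl | hab
  · simp [convexityGap, two_mul]
  · exact (H.convexityGap_pos ha hb hab).le

/-- Uniform strict convexity of `h` on compact subintervals of `(0, ∞)`. -/
lemma exists_le_convexityGap (H : VolumetricEnergy h) {η M ε : ℝ} (hη : 0 < η) (hε : 0 < ε) :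
    ∃ γ > 0, ∀ a ∈ Icc η M, ∀ b ∈ Icc η M, ε ≤ |a - b| → γ ≤ convexityGap h a b := by
  let K : Set (ℝ × ℝ) := (Icc η M ×ˢ Icc η M) ∩ {x | ε ≤ |x.1 - x.2|}
  have hK : IsCompact K := (isCompact_Icc.prod isCompact_Icc).inter_right
    (isClosed_le continuous_const (by fun_prop))
  have hpos : ∀ x ∈ K, 0 < x.1 ∧ 0 < x.2 ∧ x.1 ≠ x.2 := by
    rintro ⟨a, b⟩ ⟨⟨ha, hb⟩, hab⟩
    refine ⟨hη.trans_le ha.1, hη.trans_le hb.1, ?_⟩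
    rintro e
    simp only [mem_ofPred_eq] at hab e
    rw [e, sub_self, abs_zero] at hab
    linarith
  have hcont : ContinuousOn (fun x : ℝ × ℝ => convexityGap h x.1 x.2) K := by
    unfold convexityGap
    refine ((H.cont.comp continuousOn_fst fun x hx => (hpos x hx).1).add
      (H.cont.comp continuousOn_snd fun x hx => (hpos x hx).2.1)).sub
      (continuousOn_const.mul (H.cont.comp (by fun_prop) fun x hx => ?_))
    have := hpos x hx
    simp only [mem_Ioi]
    linarith
  rcases K.eq_empty_or_nonempty with hKe | hKne
  · refine ⟨1, one_pos, fun a ha b hb hab => ?_⟩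
    have : (a, b) ∈ K := ⟨⟨ha, hb⟩, hab⟩
    simp [hKe] at this
  · obtain ⟨x, hx, hmin⟩ := hK.exists_isMinOn hKne hcont
    exact ⟨_, H.convexityGap_pos (hpos x hx).1 (hpos x hx).2.1 (hpos x hx).2.2,
      fun a ha b hb hab => hmin (show (a, b) ∈ K from ⟨⟨ha, hb⟩, hab⟩)⟩

lemma tendsto_atTop (H : VolumetricEnergy h) : Tendsto h atTop atTop := by
  refine (H.lim_growth.atTop_mul_atTop₀ tendsto_id).congr' ?_
  filter_upwards [eventually_gt_atTop 0] with d hd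
  simp [ne_of_gt hd]

/-- Sublevel sets of `h` are contained in compact subintervals of `(0, ∞)`. -/
lemma exists_sublevel_subset_Icc (H : VolumetricEnergy h) (T : ℝ) :
    ∃ η > 0, ∃ M, ∀ a, 0 < a → h a < T → a ∈ Icc η M := by
  obtain ⟨M, hM⟩ := eventually_atTop.1 (H.tendsto_atTop.eventually_ge_atTop T)
  have h0 := H.lim_zero.eventually_ge_atTop T
  rw [eventually_nhdsWithin_iff, Metric.eventually_nhds_iff] at h0
  obtain ⟨η, hη, h0⟩ := h0
  refine ⟨η, hη, M, fun a ha haT => ⟨?_, ?_⟩⟩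
  · by_contra! hlt
    have := h0 (y := a) (by simpa [abs_of_pos ha] using hlt) ha
    linarith
  · by_contra! hlt
    have := hM a hlt.le
    linarith

/-- Superlinearity in the form of a Young-type inequality. -/
lemma exists_le_mul_add (H : VolumetricEnergy h) {ε : ℝ} (hε : 0 < ε) :
    ∃ C, 0 ≤ C ∧ ∀ a, 0 < a → a ≤ ε * h a + C := by
  obtain ⟨M, hM⟩ := eventually_atTop.1 (H.lim_growth.eventually_ge_atTop ε⁻¹)
  refine ⟨max M 0, le_max_right _ _, fun a ha => ?_⟩
  rcases le_total M a with hMa | hMa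
  · have h1 := (le_div_iff₀ ha).1 (hM a hMa)
    have h2 := mul_le_mul_of_nonneg_left h1 hε.le
    rw [← mul_assoc, mul_inv_cancel₀ hε.ne', one_mul] at h2
    linarith [le_max_right M 0]
  · have := mul_nonneg hε.le (H.nonneg a ha)
    linarith [le_max_left M 0]

lemma aemeasurable_comp (H : VolumetricEnergy h) {α : Type*} [MeasurableSpace α] {ν : Measure α}
    {f : α → ℝ} (hf : AEMeasurable f ν) (hpos : ∀ᵐ x ∂ν, 0 < f x) :
    AEMeasurable (fun x => h (f x)) ν := by
  classical
  have hm : Measurable ((Ioi (0 : ℝ)).piecewise h fun _ => 0) :=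
    H.cont.measurable_piecewise continuousOn_const measurableSet_Ioi
  refine (hm.comp_aemeasurable hf).congr ?_
  filter_upwards [hpos] with x hx
  simp [Set.piecewise, hx]

end VolumetricEnergy

namespace VolumetricEnergy

variable {h : ℝ → ℝ} {α : Type*} [MeasurableSpace α] {ν : Measure α}

/-- Functions with bounded energy and small convexity gap are close in measure. -/
lemma exists_measure_le_of_lintegral_convexityGap_le (H : VolumetricEnergy h) {C : ℝ}
    {ε ζ : ℝ} (hε : 0 < ε) (hζ : 0 < ζ) :
    ∃ γ > 0, ∀ f₁ f₂ : α → ℝ, AEMeasurable f₁ ν → AEMeasurable f₂ ν →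
      (∀ᵐ x ∂ν, 0 < f₁ x) → (∀ᵐ x ∂ν, 0 < f₂ x) →
      ∫⁻ x, ENNReal.ofReal (h (f₁ x)) ∂ν ≤ ENNReal.ofReal C →
      ∫⁻ x, ENNReal.ofReal (h (f₂ x)) ∂ν ≤ ENNReal.ofReal C →
      ∫⁻ x, ENNReal.ofReal (convexityGap h (f₁ x) (f₂ x)) ∂ν ≤ ENNReal.ofReal γ →
      ν {x | ε ≤ |f₁ x - f₂ x|} ≤ ENNReal.ofReal ζ := by
  set T : ℝ := 3 * (|C| + 1) / ζ with hT
  have hTpos : 0 < T := by positivity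
  obtain ⟨η, hη, M, hM⟩ := H.exists_sublevel_subset_Icc T
  obtain ⟨γ₀, hγ₀, hgap⟩ := H.exists_le_convexityGap (M := M) hη hε
  refine ⟨γ₀ * ζ / 3, by positivity, fun f₁ f₂ hf₁ hf₂ hp₁ hp₂ hC₁ hC₂ hD => ?_⟩
  have markov : ∀ f : α → ℝ, AEMeasurable f ν → (∀ᵐ x ∂ν, 0 < f x) →
      ∫⁻ x, ENNReal.ofReal (h (f x)) ∂ν ≤ ENNReal.ofReal C →
      ν {x | ENNReal.ofReal T ≤ ENNReal.ofReal (h (f x))} ≤ ENNReal.ofReal (ζ / 3) := by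
    intro f hf hp hC
    refine (meas_ge_le_lintegral_div (H.aemeasurable_comp hf hp).ennreal_ofReal
      (by simpa using hTpos) ENNReal.ofReal_ne_top).trans ?_
    refine (ENNReal.div_le_div_right hC _).trans ?_
    rw [← ENNReal.ofReal_div_of_pos hTpos]
    refine ENNReal.ofReal_le_ofReal ?_
    rw [div_le_iff₀ hTpos, hT]
    have : ζ / 3 * (3 * (|C| + 1) / ζ) = |C| + 1 := by field_simp
    rw [this]
    linarith [le_abs_self C]
  have hDm : AEMeasurable (fun x => ENNReal.ofReal (convexityGap h (f₁ x) (f₂ x))) ν := by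
    unfold convexityGap
    refine (((H.aemeasurable_comp hf₁ hp₁).add (H.aemeasurable_comp hf₂ hp₂)).sub
      ((H.aemeasurable_comp ((hf₁.add hf₂).div_const 2) ?_).const_mul 2)).ennreal_ofReal
    filter_upwards [hp₁, hp₂] with x h1 h2
    simp only [Pi.add_apply]
    linarith
  have hG : ν {x | ENNReal.ofReal γ₀ ≤ ENNReal.ofReal (convexityGap h (f₁ x) (f₂ x))} ≤
      ENNReal.ofReal (ζ / 3) := by
    refine (meas_ge_le_lintegral_div hDm (by simpa using hγ₀) ENNReal.ofReal_ne_top).trans ?_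
    refine (ENNReal.div_le_div_right hD _).trans ?_
    rw [← ENNReal.ofReal_div_of_pos hγ₀]
    refine ENNReal.ofReal_le_ofReal (le_of_eq ?_)
    field_simp
  have hsub : {x | ε ≤ |f₁ x - f₂ x|} ≤ᵐ[ν]
      ({x | ENNReal.ofReal T ≤ ENNReal.ofReal (h (f₁ x))} ∪
        {x | ENNReal.ofReal T ≤ ENNReal.ofReal (h (f₂ x))} ∪
        {x | ENNReal.ofReal γ₀ ≤ ENNReal.ofReal (convexityGap h (f₁ x) (f₂ x))} : Set α) := by
    filter_upwards [hp₁, hp₂] with x h1 h2 hx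
    by_cases ht1 : T ≤ h (f₁ x)
    · exact Or.inl (Or.inl (ENNReal.ofReal_le_ofReal ht1))
    by_cases ht2 : T ≤ h (f₂ x)
    · exact Or.inl (Or.inr (ENNReal.ofReal_le_ofReal ht2))
    exact Or.inr (ENNReal.ofReal_le_ofReal
      (hgap _ (hM _ h1 (not_le.1 ht1)) _ (hM _ h2 (not_le.1 ht2)) hx))
  refine (measure_mono_ae hsub).trans ((measure_union_le _ _).trans ?_)
  refine (add_le_add ((measure_union_le _ _).trans
    (add_le_add (markov f₁ hf₁ hp₁ hC₁) (markov f₂ hf₂ hp₂ hC₂))) hG).trans ?_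
  rw [← ENNReal.ofReal_add (by positivity) (by positivity),
    ← ENNReal.ofReal_add (by positivity) (by positivity)]
  exact ENNReal.ofReal_le_ofReal (by linarith)

/-- A sequence of bounded energy whose pairwise convexity gaps tend to zero has an
almost everywhere convergent subsequence. -/
lemma exists_subseq_tendsto_ae (H : VolumetricEnergy h) {C : ℝ} {f : ℕ → α → ℝ}
    (hf : ∀ k, AEMeasurable (f k) ν) (hpos : ∀ k, ∀ᵐ x ∂ν, 0 < f k x)
    (hC : ∀ k, ∫⁻ x, ENNReal.ofReal (h (f k x)) ∂ν ≤ ENNReal.ofReal C)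
    (hgap : ∀ γ > 0, ∃ N, ∀ k ≥ N, ∀ l ≥ N,
      ∫⁻ x, ENNReal.ofReal (convexityGap h (f k x) (f l x)) ∂ν ≤ ENNReal.ofReal γ) :
    ∃ φ : ℕ → ℕ, StrictMono φ ∧ ∃ F : α → ℝ, StronglyMeasurable F ∧
      ∀ᵐ x ∂ν, Tendsto (fun k => f (φ k) x) atTop (nhds (F x)) := by
  have key : ∀ j : ℕ, ∃ N, ∀ k ≥ N, ∀ l ≥ N,
      ν {x | (1 / 2 : ℝ) ^ j ≤ |f k x - f l x|} ≤ ENNReal.ofReal ((1 / 2 : ℝ) ^ j) := by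
    intro j
    obtain ⟨γ, hγ, hγ'⟩ := H.exists_measure_le_of_lintegral_convexityGap_le (ν := ν) (C := C)
      (ε := (1 / 2 : ℝ) ^ j) (ζ := (1 / 2 : ℝ) ^ j) (by positivity) (by positivity)
    obtain ⟨N, hN⟩ := hgap γ hγ
    exact ⟨N, fun k hk l hl => hγ' _ _ (hf k) (hf l) (hpos k) (hpos l) (hC k) (hC l)
      (hN k hk l hl)⟩
  choose N hN using key
  obtain ⟨φ, hφ, hφN⟩ := extraction_forall_of_eventually' fun j =>
    ⟨N j, fun k (hk : N j ≤ k) => hk⟩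
  refine ⟨φ, hφ, ?_⟩
  have hsum : ∑' j, ν {x | (1 / 2 : ℝ) ^ j ≤ |f (φ j) x - f (φ (j + 1)) x|} ≠ ∞ := by
    refine ne_top_of_le_ne_top ?_ (ENNReal.tsum_le_tsum fun j => hN j (φ j) (hφN j) (φ (j + 1))
      ((hφN j).trans (hφ.monotone (Nat.le_succ j))))
    rw [← ENNReal.ofReal_tsum_of_nonneg (fun j => by positivity) summable_geometric_two]
    exact ENNReal.ofReal_ne_top
  obtain ⟨F, hF, hlim⟩ := exists_stronglyMeasurable_limit_of_tendsto_ae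
    (f := fun k => f (φ k)) (μ := ν) (fun k => (hf (φ k)).aestronglyMeasurable) (by
      filter_upwards [ae_eventually_notMem hsum] with x hx
      obtain ⟨J, hJ⟩ := eventually_atTop.1 hx
      have hc : CauchySeq fun k => f (φ (k + J)) x := by
        refine cauchySeq_of_le_geometric (1 / 2) ((1 / 2 : ℝ) ^ J) (by norm_num) fun k => ?_
        have := hJ (k + J) (Nat.le_add_left _ _)
        simp only [not_le] at this
        rw [Real.dist_eq, ← pow_add, add_comm J k, show k + 1 + J = k + J + 1 by ring]
        exact this.le
      obtain ⟨l, hl⟩ := cauchySeq_tendsto_of_complete hc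
      exact ⟨l, (tendsto_add_atTop_iff_nat (f := fun k => f (φ k) x) J).1 hl⟩)
  exact ⟨F, hF, hlim⟩

/-- Almost everywhere limits of sequences of bounded energy are positive. -/
lemma ae_pos_of_tendsto (H : VolumetricEnergy h) {C : ℝ} {f : ℕ → α → ℝ} {F : α → ℝ}
    (hf : ∀ k, AEMeasurable (f k) ν) (hpos : ∀ k, ∀ᵐ x ∂ν, 0 < f k x)
    (hC : ∀ k, ∫⁻ x, ENNReal.ofReal (h (f k x)) ∂ν ≤ ENNReal.ofReal C)
    (hlim : ∀ᵐ x ∂ν, Tendsto (fun k => f k x) atTop (nhds (F x))) :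
    ∀ᵐ x ∂ν, 0 < F x := by
  have hm : ∀ k, AEMeasurable (fun x => ENNReal.ofReal (h (f k x))) ν := fun k =>
    (H.aemeasurable_comp (hf k) (hpos k)).ennreal_ofReal
  have hfin : ∫⁻ x, liminf (fun k => ENNReal.ofReal (h (f k x))) atTop ∂ν ≠ ∞ := by
    refine ne_top_of_le_ne_top ENNReal.ofReal_ne_top
      ((lintegral_liminf_le' hm).trans (b := _) (c := ENNReal.ofReal C) ?_)
    refine liminf_le_of_frequently_le' (Frequently.of_forall hC)
  have hml : AEMeasurable (fun x => liminf (fun k => ENNReal.ofReal (h (f k x))) atTop) ν := by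
    refine ⟨fun x => liminf (fun k => (hm k).mk _ x) atTop,
      Measurable.liminf fun k => (hm k).measurable_mk, ?_⟩
    filter_upwards [ae_all_iff.2 fun k => (hm k).ae_eq_mk] with x hx
    simp only [hx]
  filter_upwards [ae_all_iff.2 hpos, hlim, ae_lt_top' hml hfin]
    with x hx hxl hxt
  have h0 : 0 ≤ F x := ge_of_tendsto' hxl fun k => (hx k).le
  refine h0.lt_of_ne fun he => hxt.ne ?_
  rw [← he] at hxl
  have : Tendsto (fun k => ENNReal.ofReal (h (f k x))) atTop (nhds ∞) :=
    ENNReal.tendsto_ofReal_atTop.comp (H.lim_zero.comp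
      (tendsto_nhdsWithin_iff.2 ⟨hxl, Eventually.of_forall hx⟩))
  exact this.liminf_eq

/-- Sequences of bounded energy are uniformly integrable. -/
lemma unifIntegrable (H : VolumetricEnergy h) {C : ℝ} {f : ℕ → α → ℝ}
    (hpos : ∀ k, ∀ᵐ x ∂ν, 0 < f k x)
    (hC : ∀ k, ∫⁻ x, ENNReal.ofReal (h (f k x)) ∂ν ≤ ENNReal.ofReal C) :
    UnifIntegrable f 1 ν := by
  intro ε hε
  set e : ℝ := ε / (2 * (|C| + 1)) with he
  have hepos : 0 < e := by positivity
  obtain ⟨K, hK0, hK⟩ := H.exists_le_mul_add hepos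
  refine ⟨ε / (2 * (K + 1)), by positivity, fun k s hs hsν => ?_⟩
  rw [eLpNorm_indicator_eq_eLpNorm_restrict hs, eLpNorm_one_eq_lintegral_enorm]
  have hle : ∫⁻ x in s, ‖f k x‖ₑ ∂ν ≤
      ∫⁻ x in s, (ENNReal.ofReal e * ENNReal.ofReal (h (f k x)) + ENNReal.ofReal K) ∂ν := by
    refine lintegral_mono_ae (ae_restrict_of_ae ?_)
    filter_upwards [hpos k] with x hx
    rw [Real.enorm_eq_ofReal hx.le, ← ENNReal.ofReal_mul hepos.le,
      ← ENNReal.ofReal_add (mul_nonneg hepos.le (H.nonneg _ hx)) hK0]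
    exact ENNReal.ofReal_le_ofReal (hK _ hx)
  refine hle.trans ?_
  rw [lintegral_add_right _ measurable_const, lintegral_const_mul' _ _ ENNReal.ofReal_ne_top,
    lintegral_const, Measure.restrict_apply MeasurableSet.univ, univ_inter]
  have h1 : ENNReal.ofReal e * ∫⁻ x in s, ENNReal.ofReal (h (f k x)) ∂ν ≤
      ENNReal.ofReal (ε / 2) := by
    refine (mul_le_mul_right ((setLIntegral_le_lintegral _ _).trans (hC k)) _).trans ?_
    rw [← ENNReal.ofReal_mul hepos.le]
    refine ENNReal.ofReal_le_ofReal ?_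
    have : e * (|C| + 1) = ε / 2 := by rw [he]; field_simp
    nlinarith [le_abs_self C]
  have h2 : ENNReal.ofReal K * ν s ≤ ENNReal.ofReal (ε / 2) := by
    refine (mul_le_mul_right hsν _).trans ?_
    rw [← ENNReal.ofReal_mul hK0]
    refine ENNReal.ofReal_le_ofReal ?_
    have : (K + 1) * (ε / (2 * (K + 1))) = ε / 2 := by field_simp
    have : 0 ≤ ε / (2 * (K + 1)) := by positivity
    nlinarith
  refine (add_le_add h1 h2).trans (le_of_eq ?_)
  rw [← ENNReal.ofReal_add (by positivity) (by positivity), add_halves]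

end VolumetricEnergy

section DirectMethod

/-- The function `R ↦ c + a ∫_{(-∞, R]} f dν`. -/
def cumulative (ν : Measure ℝ) (a c : ℝ) (f : ℝ → ℝ) (R : ℝ) : ℝ :=
  c + a * ∫ t in Iic R, f t ∂ν

/-- Positive integrable densities `f` with initial value `c ≥ 0` and total `c + a ∫ f dν = L`. -/
structure Profile (ν : Measure ℝ) (a L c : ℝ) (f : ℝ → ℝ) : Prop where
  c0 : 0 ≤ c
  intg : Integrable f ν
  pos : ∀ᵐ R ∂ν, 0 < f R
  total : c + a * ∫ t, f t ∂ν = L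

/-- The energy density, as a function of the cumulative value `y`, the density `x` and `R`. -/
def profileDensity (p : ℕ) (h A B : ℝ → ℝ) (y x R : ℝ) : ℝ :=
  A R * (x ^ (p + 1) / y ^ p) + h x + B R * x

/-- The energy of the pair `(c, f)`. -/
def profileEnergy (ν : Measure ℝ) (p : ℕ) (a : ℝ) (h A B : ℝ → ℝ) (c : ℝ) (f : ℝ → ℝ) : ℝ≥0∞ :=
  ∫⁻ R, ENNReal.ofReal (profileDensity p h A B (cumulative ν a c f R) (f R) R) ∂ν

variable {ν : Measure ℝ} {p : ℕ} {a L : ℝ} {h A B : ℝ → ℝ}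

namespace Profile

variable {c c₁ c₂ : ℝ} {f f₁ f₂ : ℝ → ℝ}

lemma le_total (P : Profile ν a L c f) (ha : 0 < a) : c ≤ L := by
  have : 0 ≤ ∫ t, f t ∂ν := integral_nonneg_of_ae (P.pos.mono fun _ hx => hx.le)
  nlinarith [P.total]

lemma measurable_cumulative (P : Profile ν a L c f) (ha : 0 < a) :
    Measurable (cumulative ν a c f) := by
  refine Monotone.measurable fun R S hRS => ?_
  unfold cumulative
  have := setIntegral_mono_set P.intg.integrableOn
    (ae_restrict_of_ae (P.pos.mono fun _ hx => hx.le))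
    (LE.le.eventuallyLE (Iic_subset_Iic.2 hRS) : Iic R ≤ᵐ[ν] Iic S)
  nlinarith

lemma cumulative_pos (P : Profile ν a L c f) (ha : 0 < a) {R : ℝ} (hR : ν (Iic R) ≠ 0) :
    0 < cumulative ν a c f R := by
  have h1 : 0 < ∫ t in Iic R, f t ∂ν := by
    rw [integral_pos_iff_support_of_nonneg_ae (ae_restrict_of_ae (P.pos.mono fun _ hx => hx.le))
      P.intg.integrableOn]
    refine pos_iff_ne_zero.2 fun h0 => hR ?_
    rw [← Measure.restrict_apply_univ (Iic R) (μ := ν)]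
    refine le_antisymm (le_trans (measure_mono_ae ?_) h0.le) zero_le
    filter_upwards [ae_restrict_of_ae P.pos] with x hx _
    exact hx.ne'
  have := P.c0
  unfold cumulative
  positivity

lemma midpoint (P₁ : Profile ν a L c₁ f₁) (P₂ : Profile ν a L c₂ f₂) :
    Profile ν a L ((c₁ + c₂) / 2) (fun R => (f₁ R + f₂ R) / 2) where
  c0 := by linarith [P₁.c0, P₂.c0]
  intg := (P₁.intg.add P₂.intg).div_const 2
  pos := by
    filter_upwards [P₁.pos, P₂.pos] with R h1 h2
    linarith
  total := by
    rw [integral_div, integral_add P₁.intg P₂.intg]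
    linarith [P₁.total, P₂.total]

lemma cumulative_midpoint (P₁ : Profile ν a L c₁ f₁) (P₂ : Profile ν a L c₂ f₂) (R : ℝ) :
    cumulative ν a ((c₁ + c₂) / 2) (fun R => (f₁ R + f₂ R) / 2) R =
      (cumulative ν a c₁ f₁ R + cumulative ν a c₂ f₂ R) / 2 := by
  unfold cumulative
  rw [integral_div, integral_add P₁.intg.integrableOn P₂.intg.integrableOn]
  ring

lemma aemeasurable_density (P : Profile ν a L c f) (ha : 0 < a) (H : VolumetricEnergy h)
    (hA : Measurable A) (hB : Measurable B) :
    AEMeasurable (fun R => profileDensity p h A B (cumulative ν a c f R) (f R) R) ν := by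
  have hf := P.intg.aemeasurable
  unfold profileDensity
  exact ((hA.aemeasurable.mul ((hf.pow_const _).div
    ((P.measurable_cumulative ha).pow_const p).aemeasurable)).add
      (H.aemeasurable_comp hf P.pos)).add (hB.aemeasurable.mul hf)

/-- Midpoint convexity of the energy, with the convexity defect of `h` as a remainder. -/
lemma two_mul_energy_midpoint_add_gap_le (P₁ : Profile ν a L c₁ f₁) (P₂ : Profile ν a L c₂ f₂)
    (ha : 0 < a) (H : VolumetricEnergy h) (hA : Measurable A) (hB : Measurable B)
    (hA0 : ∀ᵐ R ∂ν, 0 ≤ A R) (hB0 : ∀ᵐ R ∂ν, 0 ≤ B R) (hν : ∀ᵐ R ∂ν, ν (Iic R) ≠ 0) :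
    2 * profileEnergy ν p a h A B ((c₁ + c₂) / 2) (fun R => (f₁ R + f₂ R) / 2) +
        ∫⁻ R, ENNReal.ofReal (convexityGap h (f₁ R) (f₂ R)) ∂ν ≤
      profileEnergy ν p a h A B c₁ f₁ + profileEnergy ν p a h A B c₂ f₂ := by
  have m1 := (P₁.aemeasurable_density (p := p) ha H hA hB).ennreal_ofReal
  have mm := ((P₁.midpoint P₂).aemeasurable_density (p := p) ha H hA hB).ennreal_ofReal
  unfold profileEnergy
  rw [← lintegral_add_left' m1, ← lintegral_const_mul'' _ mm,
    ← lintegral_add_left' (mm.const_mul 2)]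
  refine lintegral_mono_ae ?_
  filter_upwards [P₁.pos, P₂.pos, hA0, hB0, hν] with R h1 h2 hAR hBR hR
  have y1 := P₁.cumulative_pos ha hR
  have y2 := P₂.cumulative_pos ha hR
  rw [P₁.cumulative_midpoint P₂]
  set Y₁ := cumulative ν a c₁ f₁ R
  set Y₂ := cumulative ν a c₂ f₂ R
  have hd : ∀ x y, 0 < x → 0 < y → 0 ≤ profileDensity p h A B y x R := fun x y hx hy => by
    have := H.nonneg x hx
    unfold profileDensity
    positivity
  have e2 : (2 : ℝ≥0∞) = ENNReal.ofReal 2 := by simp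
  rw [e2, ← ENNReal.ofReal_mul zero_le_two,
    ← ENNReal.ofReal_add (mul_nonneg zero_le_two (hd _ _ (by linarith) (by linarith)))
      (H.convexityGap_nonneg h1 h2),
    ← ENNReal.ofReal_add (hd _ _ h1 y1) (hd _ _ h2 y2)]
  refine ENNReal.ofReal_le_ofReal ?_
  have hp := mul_le_mul_of_nonneg_left (perspective_midpoint_le p h1.le h2.le y1 y2) hAR
  unfold profileDensity convexityGap
  linarith

end Profile

/-- The direct method: the energy minus a continuous function of the initial value attains its
minimum over all profiles. -/
theorem exists_profile_minimizer [IsFiniteMeasure ν] (ha : 0 < a) (H : VolumetricEnergy h)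
    (hA : Measurable A) (hB : Measurable B) (hA0 : ∀ᵐ R ∂ν, 0 ≤ A R) (hB0 : ∀ᵐ R ∂ν, 0 ≤ B R)
    (hν : ∀ᵐ R ∂ν, ν (Iic R) ≠ 0) {g : ℝ → ℝ} (hg : Continuous g)
    (hfin : ∃ c f, Profile ν a L c f ∧ profileEnergy ν p a h A B c f ≠ ∞) :
    ∃ c f, Profile ν a L c f ∧ profileEnergy ν p a h A B c f ≠ ∞ ∧
      ∀ c' f', Profile ν a L c' f' → profileEnergy ν p a h A B c' f' ≠ ∞ →
        (profileEnergy ν p a h A B c f).toReal - g c ≤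
          (profileEnergy ν p a h A B c' f').toReal - g c' := by
  set S : Set ℝ := {x | ∃ c f, Profile ν a L c f ∧ profileEnergy ν p a h A B c f ≠ ∞ ∧
    x = (profileEnergy ν p a h A B c f).toReal - g c} with hS
  have hSne : S.Nonempty := by
    obtain ⟨c, f, P, hE⟩ := hfin
    exact ⟨_, c, f, P, hE, rfl⟩
  have hSb : BddBelow S := by
    obtain ⟨M, hM⟩ := (isCompact_Icc (a := (0 : ℝ)) (b := L)).exists_bound_of_continuousOn
      hg.continuousOn
    refine ⟨-M, ?_⟩
    rintro x ⟨c, f, P, -, rfl⟩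
    have h1 := (le_abs_self _).trans (hM c ⟨P.c0, P.le_total ha⟩)
    have h2 := ENNReal.toReal_nonneg (a := profileEnergy ν p a h A B c f)
    linarith
  set m := sInf S
  obtain ⟨x, -, hx, hxS⟩ := exists_seq_tendsto_sInf hSne hSb
  choose c₀ f₀ P₀ hE₀ hx₀ using hxS
  obtain ⟨c, -, φ, hφ, hc⟩ := (isCompact_Icc (a := (0 : ℝ)) (b := L)).tendsto_subseq
    fun k => ⟨(P₀ k).c0, (P₀ k).le_total ha⟩
  have hElim₀ : Tendsto (fun k => (profileEnergy ν p a h A B (c₀ (φ k)) (f₀ (φ k))).toReal) atTop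
      (nhds (m + g c)) := by
    refine ((hx.comp hφ.tendsto_atTop).add ((hg.tendsto c).comp hc)).congr fun k => ?_
    simp [hx₀]
  obtain ⟨C, hC⟩ := hElim₀.bddAbove_range
  have hC₀ : ∀ k, profileEnergy ν p a h A B (c₀ (φ k)) (f₀ (φ k)) ≤ ENNReal.ofReal C := fun k =>
    (ENNReal.le_ofReal_iff_toReal_le (hE₀ _)
      (ENNReal.toReal_nonneg.trans (hC ⟨k, rfl⟩))).2 (hC ⟨k, rfl⟩)
  have hhE : ∀ c f, Profile ν a L c f → ∫⁻ R, ENNReal.ofReal (h (f R)) ∂ν ≤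
      profileEnergy ν p a h A B c f := by
    intro c f P
    refine lintegral_mono_ae ?_
    filter_upwards [P.pos, hA0, hB0, hν] with R h1 hAR hBR hR
    refine ENNReal.ofReal_le_ofReal ?_
    have y1 := P.cumulative_pos ha hR
    unfold profileDensity
    have h3 : 0 ≤ A R * (f R ^ (p + 1) / cumulative ν a c f R ^ p) := by positivity
    have h4 : 0 ≤ B R * f R := by positivity
    linarith
  have hgap : ∀ γ > 0, ∃ N, ∀ k ≥ N, ∀ l ≥ N,
      ∫⁻ R, ENNReal.ofReal (convexityGap h (f₀ (φ k) R) (f₀ (φ l) R)) ∂ν ≤ ENNReal.ofReal γ := by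
    intro γ hγ
    have hlim : Tendsto (fun q : ℕ × ℕ =>
        (profileEnergy ν p a h A B (c₀ (φ q.1)) (f₀ (φ q.1))).toReal +
        (profileEnergy ν p a h A B (c₀ (φ q.2)) (f₀ (φ q.2))).toReal -
        2 * (m + g ((c₀ (φ q.1) + c₀ (φ q.2)) / 2))) (atTop ×ˢ atTop) (nhds 0) := by
      have hcc : Tendsto (fun q : ℕ × ℕ => (c₀ (φ q.1) + c₀ (φ q.2)) / 2) (atTop ×ˢ atTop)
          (nhds ((c + c) / 2)) :=
        ((hc.comp tendsto_fst).add (hc.comp tendsto_snd)).div_const 2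
      have := ((hElim₀.comp tendsto_fst).add (hElim₀.comp tendsto_snd)).sub
        (((((hg.tendsto _).comp hcc).const_add m)).const_mul 2)
      rw [add_self_div_two, show m + g c + (m + g c) - 2 * (m + g c) = 0 by ring] at this
      exact this
    rw [prod_atTop_atTop_eq] at hlim
    obtain ⟨N, hN⟩ := eventually_atTop_prod_self.1 (hlim.eventually_le_const hγ)
    refine ⟨N, fun k hk l hl => ?_⟩
    have hkl := hN k l hk hl
    simp only at hkl
    have hmid := (P₀ (φ k)).two_mul_energy_midpoint_add_gap_le (p := p) (P₀ (φ l)) ha H hA hB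
      hA0 hB0 hν
    set E₁ := profileEnergy ν p a h A B (c₀ (φ k)) (f₀ (φ k)) with hE₁
    set E₂ := profileEnergy ν p a h A B (c₀ (φ l)) (f₀ (φ l)) with hE₂
    set E := profileEnergy ν p a h A B ((c₀ (φ k) + c₀ (φ l)) / 2)
      (fun R => (f₀ (φ k) R + f₀ (φ l) R) / 2) with hE
    set D := ∫⁻ R, ENNReal.ofReal (convexityGap h (f₀ (φ k) R) (f₀ (φ l) R)) ∂ν
    have hE₁t : E₁ ≠ ∞ := hE₀ _
    have hE₂t : E₂ ≠ ∞ := hE₀ _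
    have hsum : E₁ + E₂ ≠ ∞ := ENNReal.add_ne_top.2 ⟨hE₁t, hE₂t⟩
    have hDt : D ≠ ∞ := ne_top_of_le_ne_top hsum (le_add_self.trans hmid)
    have h2E : 2 * E ≠ ∞ := ne_top_of_le_ne_top hsum (le_self_add.trans hmid)
    have hEt : E ≠ ∞ := fun h0 => h2E (by simp [h0])
    have hmE : m ≤ E.toReal - g ((c₀ (φ k) + c₀ (φ l)) / 2) :=
      csInf_le hSb ⟨_, _, (P₀ (φ k)).midpoint (P₀ (φ l)), hEt, rfl⟩
    have hreal := ENNReal.toReal_mono hsum hmid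
    rw [ENNReal.toReal_add h2E hDt, ENNReal.toReal_add hE₁t hE₂t, ENNReal.toReal_mul] at hreal
    simp only [ENNReal.toReal_ofNat] at hreal
    refine (ENNReal.le_ofReal_iff_toReal_le hDt hγ.le).2 ?_
    linarith
  have hm₀ : ∀ k, AEMeasurable (f₀ (φ k)) ν := fun k => (P₀ (φ k)).intg.aemeasurable
  have hp₀ : ∀ k, ∀ᵐ R ∂ν, 0 < f₀ (φ k) R := fun k => (P₀ (φ k)).pos
  obtain ⟨ψ, hψ, f, hfm, hlim⟩ := H.exists_subseq_tendsto_ae (C := C) (f := fun k => f₀ (φ k))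
    hm₀ hp₀ (fun k => (hhE _ _ (P₀ (φ k))).trans (hC₀ k)) hgap
  set F : ℕ → ℝ → ℝ := fun k => f₀ (φ (ψ k)) with hF
  set cs : ℕ → ℝ := fun k => c₀ (φ (ψ k)) with hcs
  have P : ∀ k, Profile ν a L (cs k) (F k) := fun k => P₀ _
  have hcs : Tendsto cs atTop (nhds c) := hc.comp hψ.tendsto_atTop
  have hElim : Tendsto (fun k => (profileEnergy ν p a h A B (cs k) (F k)).toReal) atTop
      (nhds (m + g c)) := hElim₀.comp hψ.tendsto_atTop
  have hEt : ∀ k, profileEnergy ν p a h A B (cs k) (F k) ≠ ∞ := fun k => hE₀ _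
  have hpos : ∀ k, ∀ᵐ R ∂ν, 0 < F k R := fun k => (P k).pos
  have hCF : ∀ k, ∫⁻ R, ENNReal.ofReal (h (F k R)) ∂ν ≤ ENNReal.ofReal C := fun k =>
    (hhE _ _ (P k)).trans (hC₀ (ψ k))
  have hfpos : ∀ᵐ R ∂ν, 0 < f R := H.ae_pos_of_tendsto (fun k => (P k).intg.aemeasurable) hpos
    hCF hlim
  have hfint : Integrable f ν := by
    refine ⟨hfm.aestronglyMeasurable, ?_⟩
    have h1 : ∫⁻ R, ‖f R‖ₑ ∂ν ≤ liminf (fun k => ∫⁻ R, ‖F k R‖ₑ ∂ν) atTop := by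
      refine le_trans (lintegral_mono_ae ?_)
        (lintegral_liminf_le' fun k => (P k).intg.aemeasurable.enorm)
      filter_upwards [hlim] with R hR
      exact (hR.enorm.liminf_eq).ge
    refine lt_of_le_of_lt h1 (lt_of_le_of_lt (b := ENNReal.ofReal (L / a)) ?_
      ENNReal.ofReal_lt_top)
    refine liminf_le_of_frequently_le' (Frequently.of_forall fun k => ?_)
    rw [← ofReal_integral_norm_eq_lintegral_enorm (P k).intg]
    refine ENNReal.ofReal_le_ofReal ?_
    rw [integral_congr_ae ((hpos k).mono fun R hR => by rw [Real.norm_of_nonneg hR.le]),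
      le_div_iff₀ ha]
    linarith [(P k).total, (P k).c0]
  have hL1 : Tendsto (fun k => eLpNorm (F k - f) 1 ν) atTop (nhds 0) :=
    tendsto_Lp_finite_of_tendsto_ae le_rfl ENNReal.one_ne_top
      (fun k => (P k).intg.aestronglyMeasurable) (memLp_one_iff_integrable.2 hfint)
      (H.unifIntegrable hpos hCF) hlim
  have hint : Tendsto (fun k => ∫ R, F k R ∂ν) atTop (nhds (∫ R, f R ∂ν)) :=
    tendsto_integral_of_L1' f hfint.aestronglyMeasurable (Eventually.of_forall fun k => (P k).intg) hL1
  have hset : ∀ R, Tendsto (fun k => cumulative ν a (cs k) (F k) R) atTop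
      (nhds (cumulative ν a c f R)) := fun R =>
    hcs.add ((tendsto_setIntegral_of_L1' f hfint.aestronglyMeasurable (Eventually.of_forall fun k => (P k).intg) hL1
      (Iic R)).const_mul a)
  have Pf : Profile ν a L c f := by
    refine ⟨ge_of_tendsto' hcs fun k => (P k).c0, hfint, hfpos, ?_⟩
    refine tendsto_nhds_unique (hcs.add (hint.const_mul a)) ?_
    simp only [(P _).total]
    exact tendsto_const_nhds
  have hfatou : profileEnergy ν p a h A B c f ≤ ENNReal.ofReal (m + g c) := by
    have h1 : profileEnergy ν p a h A B c f ≤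
        liminf (fun k => profileEnergy ν p a h A B (cs k) (F k)) atTop := by
      refine le_trans (lintegral_mono_ae ?_) (lintegral_liminf_le' fun k =>
        ((P k).aemeasurable_density (p := p) ha H hA hB).ennreal_ofReal)
      filter_upwards [hlim, hfpos, hν] with R hR hfR hνR
      have y := Pf.cumulative_pos ha hνR
      refine (Tendsto.liminf_eq (ENNReal.tendsto_ofReal ?_)).ge
      unfold profileDensity
      exact (((((hR.pow _).div ((hset R).pow p) (pow_ne_zero _ y.ne')).const_mul (A R)).add
        ((H.cont.continuousAt (Ioi_mem_nhds hfR)).tendsto.comp hR)).add (hR.const_mul (B R)))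
    refine h1.trans (le_of_eq (Tendsto.liminf_eq ?_))
    refine (ENNReal.tendsto_ofReal hElim).congr fun k => ENNReal.ofReal_toReal (hEt k)
  refine ⟨c, f, Pf, ne_top_of_le_ne_top ENNReal.ofReal_ne_top hfatou, fun c' f' P' hE' => ?_⟩
  have hmc : 0 ≤ m + g c := ge_of_tendsto' hElim fun k => ENNReal.toReal_nonneg
  have h1 := ENNReal.toReal_le_of_le_ofReal hmc hfatou
  have h2 : m ≤ (profileEnergy ν p a h A B c' f').toReal - g c' :=
    csInf_le hSb ⟨c', f', P', hE', rfl⟩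
  linarith

end DirectMethod

/-! ### The chain rule for primitives of integrable functions -/

lemma AbsolutelyContinuousOnInterval.lipschitzOnWith_comp {f φ : ℝ → ℝ} {a b : ℝ} {K : ℝ≥0}
    {s : Set ℝ} (hf : AbsolutelyContinuousOnInterval f a b) (hφ : LipschitzOnWith K φ s)
    (hs : MapsTo f (uIcc a b) s) : AbsolutelyContinuousOnInterval (fun x => φ (f x)) a b := by
  rw [absolutelyContinuousOnInterval_iff] at hf ⊢
  intro ε hε
  obtain ⟨δ, hδ, hf⟩ := hf (ε / (K + 1)) (by positivity)
  refine ⟨δ, hδ, fun E hE hEδ => ?_⟩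
  have h1 := hf E hE hEδ
  rw [lt_div_iff₀ (by positivity)] at h1
  refine lt_of_le_of_lt ?_ h1
  rw [Finset.sum_mul]
  refine Finset.sum_le_sum fun i hi => ?_
  have hmem := hE.1 i hi
  refine (hφ.dist_le_mul _ (hs hmem.1) _ (hs hmem.2)).trans ?_
  nlinarith [dist_nonneg (x := f (E.2 i).1) (y := f (E.2 i).2)]

section ChainRule

variable {f g φ φ' : ℝ → ℝ}

lemma continuousOn_of_primitive (hg : IntegrableOn g (Ioc 0 1))
    (hf : ∀ R ∈ Icc (0 : ℝ) 1, f R = f 0 + ∫ t in Ioc 0 R, g t) : ContinuousOn f (Icc 0 1) :=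
  (continuousOn_const.add (intervalIntegral.continuousOn_primitive
    ((integrableOn_Icc_iff_integrableOn_Ioc enorm_ne_top).2 hg))).congr hf

lemma pos_of_primitive (hg : IntegrableOn g (Ioc 0 1))
    (hf : ∀ R ∈ Icc (0 : ℝ) 1, f R = f 0 + ∫ t in Ioc 0 R, g t)
    (hgpos : ∀ᵐ R ∂(volume.restrict (Ioc (0 : ℝ) 1)), 0 < g R) (h0 : 0 ≤ f 0) :
    ∀ R ∈ Ioc (0 : ℝ) 1, 0 < f R := by
  intro R hR
  rw [hf R ⟨hR.1.le, hR.2⟩]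
  have hsub : Ioc 0 R ⊆ Ioc (0 : ℝ) 1 := Ioc_subset_Ioc_right hR.2
  have hpos := ae_restrict_of_ae_restrict_of_subset hsub hgpos
  have : 0 < ∫ t in Ioc 0 R, g t := by
    rw [setIntegral_pos_iff_support_of_nonneg_ae (hpos.mono fun _ h => h.le) (hg.mono_set hsub)]
    have h1 : volume (Ioc 0 R) ≤ volume (Function.support g ∩ Ioc 0 R) := by
      refine measure_mono_ae ?_
      filter_upwards [(ae_restrict_iff' measurableSet_Ioc).1 hpos] with x hx hxR
      exact ⟨(hx hxR).ne', hxR⟩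
    refine lt_of_lt_of_le ?_ h1
    simpa using hR.1
  linarith

/-- The chain rule away from the left endpoint. -/
lemma comp_primitive_sub (hg : IntegrableOn g (Ioc 0 1))
    (hf : ∀ R ∈ Icc (0 : ℝ) 1, f R = f 0 + ∫ t in Ioc 0 R, g t)
    (hpos : ∀ R ∈ Ioc (0 : ℝ) 1, 0 < f R)
    (hφ : ∀ s, 0 < s → HasDerivAt φ (φ' s) s) (hφ' : ContinuousOn φ' (Ioi 0))
    {a b : ℝ} (ha : 0 < a) (hab : a ≤ b) (hb : b ≤ 1) :
    φ (f b) - φ (f a) = ∫ t in a..b, φ' (f t) * g t := by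
  have hfc := continuousOn_of_primitive hg hf
  have hgi : IntervalIntegrable g volume 0 1 :=
    (intervalIntegrable_iff_integrableOn_Ioc_of_le zero_le_one).2 hg
  set F : ℝ → ℝ := fun R => f 0 + ∫ t in (0 : ℝ)..R, g t with hF
  have hFf : ∀ R ∈ Icc (0 : ℝ) 1, F R = f R := fun R hR => by
    rw [hf R hR, hF]
    simp only [intervalIntegral.integral_of_le hR.1]
  have hsub : Icc a b ⊆ Icc (0 : ℝ) 1 := Icc_subset_Icc ha.le hb
  have hFac : AbsolutelyContinuousOnInterval F a b := by
    have h1 : AbsolutelyContinuousOnInterval F 0 1 := by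
      have hc : AbsolutelyContinuousOnInterval (fun _ : ℝ => f 0) 0 1 :=
        (LipschitzWith.const (f 0)).lipschitzOnWith.absolutelyContinuousOnInterval
      exact hc.add (hgi.absolutelyContinuousOnInterval_intervalIntegral (c := 0) (by simp))
    refine h1.mono ?_
    rwa [uIcc_of_le hab, uIcc_of_le zero_le_one]
  obtain ⟨x, hx, hxmin⟩ := (isCompact_Icc (a := a) (b := b)).exists_isMinOn
    (nonempty_Icc.2 hab) (hfc.mono hsub)
  obtain ⟨y, hy, hymax⟩ := (isCompact_Icc (a := a) (b := b)).exists_isMaxOn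
    (nonempty_Icc.2 hab) (hfc.mono hsub)
  have hfx : 0 < f x := hpos x ⟨ha.trans_le hx.1, hx.2.trans hb⟩
  have hJ : Icc (f x) (f y) ⊆ Ioi 0 := fun s hs => hfx.trans_le hs.1
  obtain ⟨K, hK⟩ := (isCompact_Icc (a := f x) (b := f y)).exists_bound_of_continuousOn
    (hφ'.mono hJ)
  have hlip : LipschitzOnWith K.toNNReal φ (Icc (f x) (f y)) :=
    (convex_Icc _ _).lipschitzOnWith_of_nnnorm_hasDerivWithin_le
      (fun s hs => (hφ s (hJ hs)).hasDerivWithinAt) fun s hs => by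
        rw [← norm_toNNReal]
        exact Real.toNNReal_le_toNNReal (hK s hs)
  have hac : AbsolutelyContinuousOnInterval (fun R => φ (F R)) a b := by
    refine hFac.lipschitzOnWith_comp hlip fun R hR => ?_
    rw [uIcc_of_le hab] at hR
    rw [hFf R (hsub hR)]
    exact ⟨hxmin hR, hymax hR⟩
  have hftc := hac.integral_deriv_eq_sub
  rw [hFf a (hsub ⟨le_rfl, hab⟩), hFf b (hsub ⟨hab, le_rfl⟩)] at hftc
  rw [← hftc]
  refine intervalIntegral.integral_congr_ae ?_
  filter_upwards [hgi.ae_hasDerivAt_integral] with t ht htab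
  rw [uIoc_of_le hab] at htab
  have ht01 : t ∈ Icc (0 : ℝ) 1 := hsub ⟨htab.1.le, htab.2⟩
  have hd : HasDerivAt F (g t) t := by
    have := ht (by rwa [uIcc_of_le zero_le_one]) 0 (by simp)
    simpa [hF] using this.const_add (f 0)
  have hFt := hFf t ht01
  have h2 := (hφ (F t) (by rw [hFt]; exact hpos t ⟨ha.trans htab.1, ht01.2⟩)).comp t hd
  rw [hFt] at h2
  exact h2.deriv

/-- The chain rule up to the left endpoint, when the resulting derivative is integrable. -/
lemma comp_primitive (hg : IntegrableOn g (Ioc 0 1))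
    (hf : ∀ R ∈ Icc (0 : ℝ) 1, f R = f 0 + ∫ t in Ioc 0 R, g t)
    (hpos : ∀ R ∈ Ioc (0 : ℝ) 1, 0 < f R) (h0 : 0 ≤ f 0) (hφc : ContinuousOn φ (Ici 0))
    (hφ : ∀ s, 0 < s → HasDerivAt φ (φ' s) s) (hφ' : ContinuousOn φ' (Ioi 0))
    (hint : IntegrableOn (fun t => φ' (f t) * g t) (Ioc 0 1)) :
    ∀ R ∈ Icc (0 : ℝ) 1, φ (f R) = φ (f 0) + ∫ t in Ioc 0 R, φ' (f t) * g t := by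
  intro R hR
  rcases hR.1.eq_or_lt with rfl | hR0
  · simp
  have hnn : ∀ S ∈ Icc (0 : ℝ) 1, f S ∈ Ici (0 : ℝ) := fun S hS => by
    rcases hS.1.eq_or_lt with rfl | hS0
    · exact h0
    · exact (hpos S ⟨hS0, hS.2⟩).le
  have hc1 : ContinuousOn (fun S => φ (f S)) (Icc 0 1) :=
    hφc.comp (continuousOn_of_primitive hg hf) hnn
  have hc2 : ContinuousOn (fun S => ∫ t in Ioc 0 S, φ' (f t) * g t) (Icc 0 1) :=
    intervalIntegral.continuousOn_primitive ((integrableOn_Icc_iff_integrableOn_Ioc enorm_ne_top).2 hint)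
  have hle : nhdsWithin (0 : ℝ) (Ioc 0 R) ≤ nhdsWithin 0 (Icc 0 1) :=
    nhdsWithin_mono _ fun x hx => ⟨hx.1.le, hx.2.trans hR.2⟩
  have h01 : (0 : ℝ) ∈ Icc (0 : ℝ) 1 := ⟨le_rfl, zero_le_one⟩
  have ht := ((hc1 0 h01).sub (hc2 0 h01)).mono_left hle
  have hne : (nhdsWithin (0 : ℝ) (Ioc 0 R)).NeBot := left_nhdsWithin_Ioc_neBot hR0
  have hconst : ∀ S ∈ Ioc 0 R, φ (f S) - ∫ t in Ioc 0 S, φ' (f t) * g t =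
      φ (f R) - ∫ t in Ioc 0 R, φ' (f t) * g t := by
    intro S hS
    have h1 := comp_primitive_sub hg hf hpos hφ hφ' hS.1 hS.2 hR.2
    have hi : ∀ T ∈ Icc (0 : ℝ) 1,
        IntervalIntegrable (fun t => φ' (f t) * g t) volume 0 T := fun T hT =>
      (intervalIntegrable_iff_integrableOn_Ioc_of_le hT.1).2
        (hint.mono_set (Ioc_subset_Ioc_right hT.2))
    rw [← intervalIntegral.integral_interval_sub_left (hi R hR)
      (hi S ⟨hS.1.le, hS.2.trans hR.2⟩), intervalIntegral.integral_of_le hR.1,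
      intervalIntegral.integral_of_le hS.1.le] at h1
    linarith
  have heq := tendsto_nhds_unique_of_eventuallyEq ht
    (tendsto_const_nhds (x := φ (f R) - ∫ t in Ioc 0 R, φ' (f t) * g t))
    (eventually_nhdsWithin_of_forall hconst)
  simp at heq
  linarith

/-- Integrability of the derivative in the chain rule for a nondecreasing outer function. -/
lemma integrableOn_comp_primitive_of_nonneg (hg : IntegrableOn g (Ioc 0 1))
    (hf : ∀ R ∈ Icc (0 : ℝ) 1, f R = f 0 + ∫ t in Ioc 0 R, g t)
    (hgpos : ∀ᵐ R ∂(volume.restrict (Ioc (0 : ℝ) 1)), 0 < g R)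
    (h0 : 0 ≤ f 0) (hφc : ContinuousOn φ (Ici 0))
    (hφ : ∀ s, 0 < s → HasDerivAt φ (φ' s) s) (hφ' : ContinuousOn φ' (Ioi 0))
    (hφ0 : ∀ s, 0 < s → 0 ≤ φ' s) :
    IntegrableOn (fun t => φ' (f t) * g t) (Ioc 0 1) := by
  have hpos := pos_of_primitive hg hf hgpos h0
  have hfc := continuousOn_of_primitive hg hf
  have hnn : ∀ S ∈ Icc (0 : ℝ) 1, f S ∈ Ici (0 : ℝ) := fun S hS => by
    rcases hS.1.eq_or_lt with rfl | hS0
    · exact h0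
    · exact (hpos S ⟨hS0, hS.2⟩).le
  obtain ⟨M, hM⟩ := (isCompact_Icc (a := (0 : ℝ)) (b := 1)).exists_bound_of_continuousOn
    (hφc.comp hfc hnn)
  have hεpos : ∀ i : ℕ, 0 < 1 / ((i : ℝ) + 1) := fun i => by positivity
  have hεle : ∀ i : ℕ, 1 / ((i : ℝ) + 1) ≤ 1 := fun i => by
    rw [div_le_one (by positivity)]
    linarith [(Nat.cast_nonneg i : (0 : ℝ) ≤ i)]
  refine integrableOn_Ioc_of_intervalIntegral_norm_bounded_left (I := 2 * M)
    (a := fun i : ℕ => 1 / ((i : ℝ) + 1)) (l := atTop) (fun i => ?_)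
    tendsto_one_div_add_atTop_nhds_zero_nat (Eventually.of_forall fun i => ?_)
  · have hsub : Icc (1 / ((i : ℝ) + 1)) 1 ⊆ Icc 0 1 := Icc_subset_Icc_left (hεpos i).le
    refine IntegrableOn.mono_set ?_ Ioc_subset_Icc_self
    refine IntegrableOn.continuousOn_mul (hφ'.comp (hfc.mono hsub) fun t ht =>
      hpos t ⟨(hεpos i).trans_le ht.1, ht.2⟩)
      (((integrableOn_Icc_iff_integrableOn_Ioc enorm_ne_top).2 hg).mono_set hsub) isCompact_Icc
  · have h1 := comp_primitive_sub hg hf hpos hφ hφ' (hεpos i) (hεle i) le_rfl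
    rw [intervalIntegral.integral_of_le (hεle i)] at h1
    have h2 : ∫ t in Ioc (1 / ((i : ℝ) + 1)) 1, ‖φ' (f t) * g t‖ =
        ∫ t in Ioc (1 / ((i : ℝ) + 1)) 1, φ' (f t) * g t := by
      refine integral_congr_ae ?_
      have hsub : Ioc (1 / ((i : ℝ) + 1)) 1 ⊆ Ioc 0 1 := Ioc_subset_Ioc_left (hεpos i).le
      filter_upwards [ae_restrict_of_ae_restrict_of_subset hsub hgpos,
        ae_restrict_mem measurableSet_Ioc] with t ht htm
      exact Real.norm_of_nonneg (mul_nonneg (hφ0 _ (hpos t (hsub htm))) ht.le)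
    rw [h2, ← h1]
    have h3 := (abs_le.1 (hM 1 ⟨zero_le_one, le_rfl⟩)).2
    have h4 := (abs_le.1 (hM (1 / ((i : ℝ) + 1)) ⟨(hεpos i).le, hεle i⟩)).1
    simp only [Function.comp_apply] at h3 h4
    linarith

end ChainRule

/-! ### The radial measure -/

section RadialMeasure

/-- The measure `R^p dR` on `(0, 1]`. -/
def radialMeasure (p : ℕ) : Measure ℝ :=
  (volume.restrict (Ioc (0 : ℝ) 1)).withDensity fun R => ENNReal.ofReal (R ^ p)

variable {p : ℕ}

lemma measurable_ofReal_pow : Measurable fun R : ℝ => ENNReal.ofReal (R ^ p) := by fun_prop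

instance : IsFiniteMeasure (radialMeasure p) :=
  isFiniteMeasure_withDensity_ofReal
    ((continuous_pow p).integrableOn_Ioc (a := (0 : ℝ)) (b := 1)).hasFiniteIntegral

lemma ae_radialMeasure_eq : ae (radialMeasure p) = ae (volume.restrict (Ioc (0 : ℝ) 1)) := by
  refine le_antisymm (withDensity_absolutelyContinuous _ _).ae_le
    (withDensity_absolutelyContinuous' measurable_ofReal_pow.aemeasurable ?_).ae_le
  filter_upwards [ae_restrict_mem measurableSet_Ioc] with R hR
  have := pow_pos hR.1 p
  simpa using this

lemma lintegral_radialMeasure (F : ℝ → ℝ) :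
    ∫⁻ R, ENNReal.ofReal (F R) ∂(radialMeasure p) =
      ∫⁻ R in Ioc (0 : ℝ) 1, ENNReal.ofReal (R ^ p * F R) := by
  rw [radialMeasure, lintegral_withDensity_eq_lintegral_mul_non_measurable _ measurable_ofReal_pow
    (Eventually.of_forall fun _ => ENNReal.ofReal_lt_top)]
  refine lintegral_congr_ae ?_
  filter_upwards [ae_restrict_mem measurableSet_Ioc] with R hR
  rw [Pi.mul_apply, ENNReal.ofReal_mul (pow_nonneg hR.1.le p)]

lemma integrable_radialMeasure_iff {f : ℝ → ℝ} :
    Integrable f (radialMeasure p) ↔ IntegrableOn (fun R => R ^ p * f R) (Ioc (0 : ℝ) 1) := by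
  rw [radialMeasure, integrable_withDensity_iff_integrable_smul' measurable_ofReal_pow
    (Eventually.of_forall fun _ => ENNReal.ofReal_lt_top)]
  refine integrable_congr ?_
  filter_upwards [ae_restrict_mem measurableSet_Ioc] with R hR
  rw [ENNReal.toReal_ofReal (pow_nonneg hR.1.le p), smul_eq_mul]

lemma setIntegral_Iic_radialMeasure (f : ℝ → ℝ) {R : ℝ} (hR : R ≤ 1) :
    ∫ t in Iic R, f t ∂(radialMeasure p) = ∫ t in Ioc 0 R, t ^ p * f t := by
  rw [radialMeasure, setIntegral_withDensity_eq_setIntegral_toReal_smul measurable_ofReal_pow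
    (Eventually.of_forall fun _ => ENNReal.ofReal_lt_top) _ measurableSet_Iic,
    Measure.restrict_restrict measurableSet_Iic, inter_comm, Ioc_inter_Iic, min_eq_right hR]
  refine integral_congr_ae ?_
  filter_upwards [ae_restrict_mem measurableSet_Ioc] with t ht
  rw [ENNReal.toReal_ofReal (pow_nonneg ht.1.le p), smul_eq_mul]

lemma integral_radialMeasure (f : ℝ → ℝ) :
    ∫ t, f t ∂(radialMeasure p) = ∫ t in Ioc (0 : ℝ) 1, t ^ p * f t := by
  rw [← setIntegral_Iic_radialMeasure f le_rfl, ← setIntegral_univ]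
  refine setIntegral_congr_set ?_
  have : ∀ᵐ t ∂(radialMeasure p), t ∈ Ioc (0 : ℝ) 1 := by
    rw [ae_radialMeasure_eq]
    exact ae_restrict_mem measurableSet_Ioc
  filter_upwards [this] with t ht
  exact propext ⟨fun _ => ht.2, fun _ => trivial⟩

lemma cumulative_radialMeasure (a c : ℝ) (f : ℝ → ℝ) {R : ℝ} (hR : R ≤ 1) :
    cumulative (radialMeasure p) a c f R = c + ∫ t in Ioc 0 R, a * (t ^ p * f t) := by
  rw [cumulative, setIntegral_Iic_radialMeasure f hR, integral_const_mul]

lemma radialMeasure_Iic_ne_zero : ∀ᵐ R ∂(radialMeasure p), radialMeasure p (Iic R) ≠ 0 := by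
  rw [ae_radialMeasure_eq]
  filter_upwards [ae_restrict_mem measurableSet_Ioc] with R hR h0
  have h1 : volume.restrict (Ioc (0 : ℝ) 1) (Iic R) = 0 :=
    (withDensity_absolutelyContinuous' measurable_ofReal_pow.aemeasurable (by
      filter_upwards [ae_restrict_mem measurableSet_Ioc] with R hR
      have := pow_pos hR.1 p
      simpa using this)) h0
  rw [Measure.restrict_apply measurableSet_Iic, inter_comm, Ioc_inter_Iic, min_eq_right hR.2] at h1
  simp [hR.1.not_ge] at h1

end RadialMeasure

/-! ### Reduction of the modified energy -/

lemma GoodH.volumetricEnergy {h h' h'' : ℝ → ℝ} (hh : GoodH h h' h'') : VolumetricEnergy h where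
  nonneg := hh.nonneg
  cont := fun d hd => (hh.deriv1 d hd).continuousAt.continuousWithinAt
  strictConvex := by
    have hcont : ContinuousOn h (Ioi 0) :=
      fun d hd => (hh.deriv1 d hd).continuousAt.continuousWithinAt
    refine strictConvexOn_of_deriv2_pos (convex_Ioi 0) hcont fun d hd => ?_
    rw [interior_Ioi] at hd
    have : deriv h =ᶠ[nhds d] h' := by
      filter_upwards [Ioi_mem_nhds hd] with x hx using (hh.deriv1 x hx).deriv
    simp only [Function.iterate_succ, Function.iterate_zero, Function.comp_apply, id]
    rw [this.deriv_eq, (hh.deriv2 d hd).deriv]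
    exact hh.hpp_pos d hd
  lim_zero := hh.lim_zero
  lim_growth := hh.lim_growth

/-- For `P ≥ 0` and `Q` integrable, the extended integral of `P + Q` splits. -/
lemma lintegral_sub_lintegral_of_nonneg_add_integrable {α : Type*} [MeasurableSpace α]
    {μ : Measure α} {P Q : α → ℝ} (hP : AEMeasurable P μ) (hP0 : ∀ᵐ x ∂μ, 0 ≤ P x)
    (hQ : Integrable Q μ) :
    ((∫⁻ x, ENNReal.ofReal (P x + Q x) ∂μ : ℝ≥0∞) : EReal) -
        ((∫⁻ x, ENNReal.ofReal (-(P x + Q x)) ∂μ : ℝ≥0∞) : EReal) =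
      ((∫⁻ x, ENNReal.ofReal (P x) ∂μ : ℝ≥0∞) : EReal) + ((∫ x, Q x ∂μ : ℝ) : EReal) := by
  have hQabs : ∫⁻ x, ENNReal.ofReal |Q x| ∂μ ≠ ∞ := by
    have := hQ.hasFiniteIntegral
    rw [hasFiniteIntegral_iff_norm] at this
    exact this.ne
  have hneg : ∫⁻ x, ENNReal.ofReal (-(P x + Q x)) ∂μ ≠ ∞ := by
    refine ne_top_of_le_ne_top hQabs (lintegral_mono_ae ?_)
    filter_upwards [hP0] with x hx
    exact ENNReal.ofReal_le_ofReal (by linarith [neg_le_abs (Q x)])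
  by_cases hPtop : ∫⁻ x, ENNReal.ofReal (P x) ∂μ = ∞
  · have hpos : ∫⁻ x, ENNReal.ofReal (P x + Q x) ∂μ = ∞ := by
      by_contra hne
      have h1 : ∫⁻ x, ENNReal.ofReal (P x) ∂μ ≤
          ∫⁻ x, (ENNReal.ofReal (P x + Q x) + ENNReal.ofReal |Q x|) ∂μ := by
        refine lintegral_mono fun x => ?_
        refine le_trans (ENNReal.ofReal_le_ofReal ?_) ENNReal.ofReal_add_le
        linarith [neg_le_abs (Q x)]
      rw [lintegral_add_right' _ hQ.aemeasurable.abs.ennreal_ofReal, hPtop, top_le_iff] at h1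
      exact ENNReal.add_ne_top.2 ⟨hne, hQabs⟩ h1
    rw [hpos, hPtop, EReal.coe_ennreal_top, EReal.top_add_coe]
    rw [← ENNReal.ofReal_toReal hneg, EReal.coe_ennreal_ofReal, EReal.top_sub_coe]
  · have hPint : Integrable P μ := by
      refine ⟨hP.aestronglyMeasurable, ?_⟩
      rw [hasFiniteIntegral_iff_ofReal hP0]
      exact Ne.lt_top hPtop
    have hPQ := hPint.add hQ
    have hpos : ∫⁻ x, ENNReal.ofReal (P x + Q x) ∂μ ≠ ∞ := by
      have := hPQ.hasFiniteIntegral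
      rw [hasFiniteIntegral_iff_norm] at this
      refine ne_top_of_le_ne_top this.ne (lintegral_mono fun x => ?_)
      exact ENNReal.ofReal_le_ofReal (le_abs_self _)
    have h1 := integral_eq_lintegral_pos_part_sub_lintegral_neg_part hPQ
    have h2 := integral_eq_lintegral_of_nonneg_ae hP0 hP.aestronglyMeasurable
    rw [integral_add' hPint hQ, h2] at h1
    rw [← ENNReal.ofReal_toReal hpos, ← ENNReal.ofReal_toReal hneg, ← ENNReal.ofReal_toReal hPtop]
    simp only [EReal.coe_ennreal_ofReal, max_eq_left ENNReal.toReal_nonneg]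
    rw [← EReal.coe_sub, ← EReal.coe_add, h1]
    rfl

section Reduction

/-- The weight of the term `δ^n / r^{n(n-1)}`, with `n = p + 1`. -/
def stretchWeight (p : ℕ) (κ R : ℝ) : ℝ := κ / (p + 1) * R ^ (p * (p + 1))

/-- The weight of the term linear in `δ`, with `n = p + 1`. -/
def linearWeight (p : ℕ) (κ R : ℝ) : ℝ := κ * p * (-Real.log R)

/-- The boundary term at the cavity, as a function of `r(0)^n`, with `n = p + 1`. -/
def cavityTerm (p : ℕ) (κ c : ℝ) : ℝ := κ * p / (p + 1) ^ 2 * (c * Real.log c)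

/-- The energy of `profileEnergy` that corresponds to the modified functional. -/
def reducedEnergy (p : ℕ) (κ : ℝ) (h : ℝ → ℝ) (c : ℝ) (f : ℝ → ℝ) : ℝ≥0∞ :=
  profileEnergy (radialMeasure p) p (p + 1) h (stretchWeight p κ) (linearWeight p κ) c f

variable {p : ℕ} {κ lam c : ℝ} {h r r' f : ℝ → ℝ}

lemma measurable_stretchWeight : Measurable (stretchWeight p κ) := by
  unfold stretchWeight
  fun_prop

lemma measurable_linearWeight : Measurable (linearWeight p κ) := by
  unfold linearWeight
  fun_prop

lemma continuous_cavityTerm : Continuous (cavityTerm p κ) :=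
  continuous_const.mul Real.continuous_mul_log

lemma stretchWeight_nonneg (hκ : 0 < κ) : ∀ᵐ R ∂(radialMeasure p), 0 ≤ stretchWeight p κ R := by
  rw [ae_radialMeasure_eq]
  filter_upwards [ae_restrict_mem measurableSet_Ioc] with R hR
  have := hR.1
  unfold stretchWeight
  positivity

lemma linearWeight_nonneg (hκ : 0 < κ) : ∀ᵐ R ∂(radialMeasure p), 0 ≤ linearWeight p κ R := by
  rw [ae_radialMeasure_eq]
  filter_upwards [ae_restrict_mem measurableSet_Ioc] with R hR
  have := Real.log_nonpos hR.1.le hR.2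
  exact mul_nonneg (by positivity) (by linarith)

lemma Adm.pos (hr : Adm lam r r') : ∀ R ∈ Ioc (0 : ℝ) 1, 0 < r R :=
  pos_of_primitive hr.intg hr.ftc hr.derivPos hr.c0

lemma pow_mul_del {R : ℝ} (hR : 0 < R) : R ^ p * del (p + 1) r r' R = r R ^ p * r' R := by
  simp only [del, Nat.add_sub_cancel, div_pow]
  field_simp

lemma hasDerivAt_pow_succ (s : ℝ) :
    HasDerivAt (fun s : ℝ => s ^ (p + 1)) ((p + 1) * s ^ p) s := by
  simpa using hasDerivAt_pow (p + 1) s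

lemma Adm.integrableOn_pow_mul (hr : Adm lam r r') :
    IntegrableOn (fun t => ((p + 1) * r t ^ p) * r' t) (Ioc (0 : ℝ) 1) :=
  integrableOn_comp_primitive_of_nonneg (φ := fun s => s ^ (p + 1))
    (φ' := fun s => (p + 1) * s ^ p) hr.intg hr.ftc hr.derivPos hr.c0 (by fun_prop)
    (fun s _ => hasDerivAt_pow_succ s) (by fun_prop) fun s hs => by positivity

lemma Adm.cumulative_del (hr : Adm lam r r') {R : ℝ} (hR : R ∈ Icc (0 : ℝ) 1) :
    cumulative (radialMeasure p) (p + 1) (r 0 ^ (p + 1)) (del (p + 1) r r') R =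
      r R ^ (p + 1) := by
  rw [cumulative_radialMeasure _ _ _ hR.2,
    comp_primitive (φ := fun s => s ^ (p + 1)) (φ' := fun s => (p + 1) * s ^ p) hr.intg hr.ftc
      hr.pos hr.c0 (by fun_prop) (fun s _ => hasDerivAt_pow_succ s) (by fun_prop)
      hr.integrableOn_pow_mul R hR]
  congr 1
  refine setIntegral_congr_fun measurableSet_Ioc fun t ht => ?_
  simp only [pow_mul_del ht.1]
  ring

lemma Adm.profile (hr : Adm lam r r') :
    Profile (radialMeasure p) (p + 1) (lam ^ (p + 1)) (r 0 ^ (p + 1)) (del (p + 1) r r') where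
  c0 := pow_nonneg hr.c0 _
  intg := by
    rw [integrable_radialMeasure_iff]
    have hp : (p : ℝ) + 1 ≠ 0 := by positivity
    refine IntegrableOn.congr_fun (hr.integrableOn_pow_mul (p := p) |>.const_mul (p + 1 : ℝ)⁻¹)
      (fun t ht => ?_) measurableSet_Ioc
    simp only [pow_mul_del ht.1]
    field_simp
  pos := by
    rw [ae_radialMeasure_eq]
    filter_upwards [ae_restrict_mem measurableSet_Ioc, hr.derivPos] with R hR hR'
    exact mul_pos hR' (pow_pos (div_pos (hr.pos R hR) hR.1) _)
  total := by
    rw [integral_radialMeasure, ← setIntegral_Iic_radialMeasure _ le_rfl, ← hr.bc]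
    exact hr.cumulative_del ⟨zero_le_one, le_rfl⟩

lemma stretchWeight_mul {q ρ R : ℝ} (hρ : 0 < ρ) (hR : 0 < R) :
    stretchWeight p κ R * ((q * (ρ / R) ^ p) ^ (p + 1) / (ρ ^ (p + 1)) ^ p) =
      κ / (p + 1) * q ^ (p + 1) := by
  unfold stretchWeight
  rw [mul_pow, div_pow, div_pow, ← pow_mul, ← pow_mul, ← pow_mul, mul_comm (p + 1) p]
  field_simp

lemma pow_mul_PhiHat {q ρ R : ℝ} (hρ : 0 < ρ) (hR : 0 < R) :
    R ^ p * PhiHat (p + 1) κ h q (ρ / R) =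
      R ^ p * profileDensity p h (stretchWeight p κ) (linearWeight p κ) (ρ ^ (p + 1))
        (q * (ρ / R) ^ p) R + κ * p * ρ ^ p * (Real.log ρ + 1 / (p + 1)) * q := by
  unfold PhiHat profileDensity
  rw [stretchWeight_mul hρ hR, Real.log_div hρ.ne' hR.ne', linearWeight]
  push_cast
  simp only [div_pow]
  field_simp
  ring

lemma hasDerivAt_pow_mul_log {s : ℝ} (hs : 0 < s) :
    HasDerivAt (fun s : ℝ => κ * p / (p + 1) * (s ^ (p + 1) * Real.log s))
      (κ * p * s ^ p * (Real.log s + 1 / (p + 1))) s := by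
  have h1 := ((hasDerivAt_pow_succ (p := p) s).mul (Real.hasDerivAt_log hs.ne')).const_mul
    (κ * p / (p + 1))
  refine h1.congr_deriv ?_
  field_simp
  ring

lemma continuous_pow_mul_log (hp : 1 ≤ p) : Continuous fun s : ℝ => s ^ p * Real.log s := by
  obtain ⟨m, rfl⟩ := Nat.exists_eq_add_of_le' hp
  have : (fun s : ℝ => s ^ (m + 1) * Real.log s) = fun s => s ^ m * (s * Real.log s) := by
    ext s
    ring
  rw [this]
  exact (continuous_pow m).mul Real.continuous_mul_log

/-- The modified functional in terms of the determinant. -/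
lemma Adm.IHatE_eq (hp : 1 ≤ p) (hκ : 0 < κ) (H : VolumetricEnergy h) (hr : Adm lam r r') :
    IHatE (p + 1) κ lam h r r' =
      (reducedEnergy p κ h (r 0 ^ (p + 1)) (del (p + 1) r r') : EReal) -
        (cavityTerm p κ (r 0 ^ (p + 1)) : EReal) := by
  have ha : (0 : ℝ) < p + 1 := by positivity
  have hPr := hr.profile (p := p)
  set c := r 0 ^ (p + 1) with hc
  set D : ℝ → ℝ := fun R => profileDensity p h (stretchWeight p κ) (linearWeight p κ)
    (cumulative (radialMeasure p) (p + 1) c (del (p + 1) r r') R) (del (p + 1) r r' R) R with hD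
  set Q : ℝ → ℝ := fun R => κ * p * r R ^ p * (Real.log (r R) + 1 / (p + 1)) * r' R with hQ
  have hsplit : ∀ R ∈ Ioc (0 : ℝ) 1,
      R ^ p * PhiHat (p + 1) κ h (r' R) (r R / R) = R ^ p * D R + Q R := fun R hR => by
    simp only [hD, hr.cumulative_del ⟨hR.1.le, hR.2⟩, hc]
    exact pow_mul_PhiHat (hr.pos R hR) hR.1
  have hDm : AEMeasurable (fun R => R ^ p * D R) (volume.restrict (Ioc (0 : ℝ) 1)) := by
    refine (continuous_pow p).aemeasurable.mul ?_
    refine AEMeasurable.mono_ac (hPr.aemeasurable_density (p := p) ha H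
      (measurable_stretchWeight (κ := κ)) (measurable_linearWeight (κ := κ))) ?_
    exact Measure.ae_le_iff_absolutelyContinuous.1 ae_radialMeasure_eq.ge
  have hD0 : ∀ᵐ R ∂(volume.restrict (Ioc (0 : ℝ) 1)), 0 ≤ R ^ p * D R := by
    have h1 := hPr.pos
    have h2 := stretchWeight_nonneg (p := p) hκ
    have h3 := linearWeight_nonneg (p := p) hκ
    rw [ae_radialMeasure_eq] at h1 h2 h3
    filter_upwards [h1, h2, h3, ae_restrict_mem measurableSet_Ioc] with R h1 h2 h3 hR
    have h4 := H.nonneg _ h1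
    have h5 := hr.pos R hR
    have h6 := hR.1
    simp only [hD, hr.cumulative_del ⟨hR.1.le, hR.2⟩, hc, profileDensity]
    positivity
  have hrc := continuousOn_of_primitive hr.intg hr.ftc
  have hcont : Continuous fun s : ℝ => κ * p * s ^ p * (Real.log s + 1 / (p + 1)) := by
    have := (continuous_pow_mul_log hp).const_mul (κ * p) |>.add
      ((continuous_pow p).const_mul (κ * p / (p + 1)))
    refine this.congr fun s => ?_
    simp only [Pi.add_apply]
    ring
  have hQi : IntegrableOn Q (Ioc (0 : ℝ) 1) := by
    refine IntegrableOn.mono_set ?_ Ioc_subset_Icc_self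
    exact IntegrableOn.continuousOn_mul (hcont.comp_continuousOn hrc)
      ((integrableOn_Icc_iff_integrableOn_Ioc enorm_ne_top).2 hr.intg) isCompact_Icc
  have hQint : ∫ R in Ioc (0 : ℝ) 1, Q R =
      κ * p / (p + 1) * lam ^ (p + 1) * Real.log lam - cavityTerm p κ c := by
    have h1 := comp_primitive
      (φ := fun s : ℝ => κ * p / (p + 1) * (s ^ (p + 1) * Real.log s))
      (φ' := fun s => κ * p * s ^ p * (Real.log s + 1 / (p + 1))) hr.intg hr.ftc hr.pos hr.c0
      ((continuous_pow_mul_log (by omega)).const_mul _).continuousOn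
      (fun s hs => hasDerivAt_pow_mul_log hs) hcont.continuousOn hQi 1 ⟨zero_le_one, le_rfl⟩
    rw [hr.bc] at h1
    rw [cavityTerm, hc, Real.log_pow]
    push_cast
    have e : κ * p / (p + 1) ^ 2 * (r 0 ^ (p + 1) * ((p + 1) * Real.log (r 0))) =
        κ * p / (p + 1) * (r 0 ^ (p + 1) * Real.log (r 0)) := by
      field_simp
    rw [e]
    linarith
  have hpos : ∫⁻ R in Ioc (0 : ℝ) 1, ENNReal.ofReal (R ^ p * PhiHat (p + 1) κ h (r' R) (r R / R)) =
      ∫⁻ R in Ioc (0 : ℝ) 1, ENNReal.ofReal (R ^ p * D R + Q R) :=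
    setLIntegral_congr_fun measurableSet_Ioc fun R hR => by simp only [hsplit R hR]
  have hneg : ∫⁻ R in Ioc (0 : ℝ) 1,
      ENNReal.ofReal (-(R ^ p * PhiHat (p + 1) κ h (r' R) (r R / R))) =
      ∫⁻ R in Ioc (0 : ℝ) 1, ENNReal.ofReal (-(R ^ p * D R + Q R)) :=
    setLIntegral_congr_fun measurableSet_Ioc fun R hR => by simp only [hsplit R hR]
  have hE : reducedEnergy p κ h c (del (p + 1) r r') =
      ∫⁻ R in Ioc (0 : ℝ) 1, ENNReal.ofReal (R ^ p * D R) := lintegral_radialMeasure D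
  rw [IHatE, Nat.add_sub_cancel, hpos, hneg,
    lintegral_sub_lintegral_of_nonneg_add_integrable hDm hD0 hQi, hQint, hE,
    sub_eq_add_neg (G := EReal), sub_eq_add_neg (G := EReal), add_assoc, ← EReal.coe_neg,
    ← EReal.coe_neg, ← EReal.coe_add]
  congr 2
  push_cast
  ring

lemma reducedEnergy_congr {f₁ f₂ : ℝ → ℝ} (hf : f₁ =ᵐ[radialMeasure p] f₂) :
    reducedEnergy p κ h c f₁ = reducedEnergy p κ h c f₂ := by
  refine lintegral_congr_ae ?_
  filter_upwards [hf] with R hR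
  have : cumulative (radialMeasure p) (p + 1) c f₁ R =
      cumulative (radialMeasure p) (p + 1) c f₂ R := by
    unfold cumulative
    rw [integral_congr_ae (ae_restrict_of_ae hf)]
  rw [this, hR]

/-- Every profile comes from an admissible deformation. -/
lemma Profile.exists_adm (hlam : 0 < lam)
    (P : Profile (radialMeasure p) (p + 1) (lam ^ (p + 1)) c f) :
    ∃ r r', Adm lam r r' ∧ r 0 ^ (p + 1) = c ∧ del (p + 1) r r' =ᵐ[radialMeasure p] f := by
  have hp : (0 : ℝ) < p + 1 := by positivity
  set u := cumulative (radialMeasure p) (p + 1) c f with hu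
  set w : ℝ → ℝ := fun t => (p + 1) * (t ^ p * f t) with hw
  have hu0 : u 0 = c := by
    rw [hu, cumulative_radialMeasure _ _ _ zero_le_one]
    simp
  have hftc : ∀ R ∈ Icc (0 : ℝ) 1, u R = u 0 + ∫ t in Ioc 0 R, w t := fun R hR => by
    rw [hu0, hu, cumulative_radialMeasure _ _ _ hR.2]
  have hwi : IntegrableOn w (Ioc 0 1) := (integrable_radialMeasure_iff.1 P.intg).const_mul _
  have hwpos : ∀ᵐ R ∂(volume.restrict (Ioc (0 : ℝ) 1)), 0 < w R := by
    have h1 := P.pos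
    rw [ae_radialMeasure_eq] at h1
    filter_upwards [h1, ae_restrict_mem measurableSet_Ioc] with R h1 hR
    have := hR.1
    simp only [hw]
    positivity
  have hc0 : 0 ≤ u 0 := hu0 ▸ P.c0
  have hpos := pos_of_primitive hwi hftc hwpos hc0
  set e : ℝ := ((p + 1 : ℕ) : ℝ)⁻¹ with he
  have he0 : 0 < e := by positivity
  have hφc : ContinuousOn (fun s : ℝ => s ^ e) (Ici 0) :=
    (Real.continuous_rpow_const he0.le).continuousOn
  have hφ : ∀ s : ℝ, 0 < s → HasDerivAt (fun s : ℝ => s ^ e) (e * s ^ (e - 1)) s :=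
    fun s hs => Real.hasDerivAt_rpow_const (Or.inl hs.ne')
  have hφ' : ContinuousOn (fun s : ℝ => e * s ^ (e - 1)) (Ioi 0) :=
    continuousOn_const.mul (continuousOn_id.rpow_const fun s hs => Or.inl (ne_of_gt hs))
  have hφ0 : ∀ s : ℝ, 0 < s → 0 ≤ e * s ^ (e - 1) := fun s hs => by positivity
  have hint := integrableOn_comp_primitive_of_nonneg hwi hftc hwpos hc0 hφc hφ hφ' hφ0
  have hrpow : ∀ s : ℝ, 0 ≤ s → (s ^ e) ^ (p + 1) = s := fun s hs =>
    Real.rpow_inv_natCast_pow hs (Nat.succ_ne_zero p)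
  refine ⟨fun R => u R ^ e, fun R => e * u R ^ (e - 1) * w R, ⟨hint,
    comp_primitive hwi hftc hpos hc0 hφc hφ hφ' hint, ?_, ?_, Real.rpow_nonneg hc0 _⟩, ?_, ?_⟩
  · filter_upwards [hwpos, ae_restrict_mem measurableSet_Ioc] with R h1 hR
    have := hpos R hR
    positivity
  · have hu1 : u 1 = lam ^ (p + 1) := by
      rw [hu, ← P.total, cumulative, setIntegral_Iic_radialMeasure _ le_rfl,
        integral_radialMeasure]
    simp only [hu1]
    exact Real.pow_rpow_inv_natCast hlam.le (Nat.succ_ne_zero p)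
  · rw [hrpow _ hc0, hu0]
  · rw [Filter.EventuallyEq, ae_radialMeasure_eq]
    filter_upwards [ae_restrict_mem measurableSet_Ioc] with R hR
    have hRp := pow_pos hR.1 p
    have hy := hpos R hR
    have hz : 0 < u R ^ e := Real.rpow_pos_of_pos hy _
    refine mul_left_cancel₀ hRp.ne' ?_
    rw [pow_mul_del hR.1, Real.rpow_sub_one hy.ne']
    have h1 := hrpow _ hy.le
    rw [pow_succ] at h1
    have h2 : e * (p + 1) = 1 := by
      rw [he]
      push_cast
      field_simp
    calc (u R ^ e) ^ p * (e * (u R ^ e / u R) * w R)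
        = ((u R ^ e) ^ p * u R ^ e) / u R * (e * (p + 1)) * (R ^ p * f R) := by
          simp only [hw]
          ring
      _ = R ^ p * f R := by rw [h1, h2, div_self hy.ne', one_mul, one_mul]

lemma adm_linear (hlam : 0 < lam) : Adm lam (fun R => lam * R) (fun _ => lam) where
  intg := by simp
  ftc := fun R hR => by simp [hR.1, mul_comm]
  derivPos := Eventually.of_forall fun _ => hlam
  bc := by simp
  c0 := by simp

/-- The homogeneous deformation has finite energy. -/
lemma exists_reducedEnergy_ne_top (hp : 1 ≤ p) (hlam : 0 < lam) :
    ∃ c f, Profile (radialMeasure p) (p + 1) (lam ^ (p + 1)) c f ∧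
      reducedEnergy p κ h c f ≠ ∞ := by
  have hr := adm_linear hlam
  refine ⟨_, _, hr.profile, ?_⟩
  rw [reducedEnergy, profileEnergy, lintegral_radialMeasure]
  have hcont : Continuous fun R : ℝ => (κ / (p + 1) * lam ^ (p + 1) + h (lam * lam ^ p)) * R ^ p -
      κ * p * (lam * lam ^ p) * (R ^ p * Real.log R) :=
    ((continuous_pow p).const_mul _).sub ((continuous_pow_mul_log hp).const_mul _)
  have hfin := (hcont.integrableOn_Ioc (a := 0) (b := 1) (μ := volume)).lintegral_lt_top.ne
  rwa [setLIntegral_congr_fun measurableSet_Ioc fun R hR => ?_]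
  have hR0 := hR.1
  have hdel : del (p + 1) (fun R => lam * R) (fun _ => lam) R = lam * (lam * R / R) ^ p := rfl
  have hdel2 : lam * (lam * R / R) ^ p = lam * lam ^ p := by field_simp
  simp only [hr.cumulative_del ⟨hR.1.le, hR.2⟩, profileDensity, hdel]
  rw [stretchWeight_mul (hr.pos R hR) hR0, hdel2, linearWeight]
  congr 1
  ring

end Reduction

/-- the modified functional `Î` attains its infimum over `𝒜_λ`, and
the infimum is a real number. -/
theorem stmt10 (n : ℕ) (hn : 2 ≤ n) (κ : ℝ) (hκ : 0 < κ)
    (h h' h'' : ℝ → ℝ) (hh : GoodH h h' h'') (hconv : ConvexOn ℝ (Set.Ioi 0) h)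
    (lam : ℝ) (hlam : 0 < lam) :
    ∃ rs rs' : ℝ → ℝ, Adm lam rs rs' ∧
      (∀ r r' : ℝ → ℝ, Adm lam r r' → IHatE n κ lam h rs rs' ≤ IHatE n κ lam h r r') ∧
      ∃ m : ℝ, IHatE n κ lam h rs rs' = (m : EReal) := by
  obtain ⟨p, rfl⟩ : ∃ p, n = p + 1 := ⟨n - 1, by omega⟩
  have hp : 1 ≤ p := by omega
  have H := hh.volumetricEnergy
  have hcoe : ∀ (E : ℝ≥0∞) (x : ℝ), E ≠ ∞ →
      (E : EReal) - (x : EReal) = ((E.toReal - x : ℝ) : EReal) := fun E x hE => by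
    lift E to ℝ≥0 using hE
    rfl
  obtain ⟨c, f, P, hE, hmin⟩ := exists_profile_minimizer (ν := radialMeasure p) (p := p)
    (by positivity) H measurable_stretchWeight measurable_linearWeight (stretchWeight_nonneg hκ)
    (linearWeight_nonneg hκ) radialMeasure_Iic_ne_zero (continuous_cavityTerm (p := p) (κ := κ))
    (exists_reducedEnergy_ne_top hp hlam)
  obtain ⟨rs, rs', hrs, hc, hf⟩ := P.exists_adm hlam
  have hval : IHatE (p + 1) κ lam h rs rs' =
      (((reducedEnergy p κ h c f).toReal - cavityTerm p κ c : ℝ) : EReal) := by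
    rw [hrs.IHatE_eq hp hκ H, hc, reducedEnergy_congr hf,
      hcoe (reducedEnergy p κ h c f) _ hE]
  refine ⟨rs, rs', hrs, fun r r' hr => ?_, _, hval⟩
  rw [hval, hr.IHatE_eq hp hκ H]
  by_cases htop : reducedEnergy p κ h (r 0 ^ (p + 1)) (del (p + 1) r r') = ∞
  · rw [htop, EReal.coe_ennreal_top, EReal.top_sub_coe]
    exact le_top
  · rw [hcoe _ _ htop, EReal.coe_le_coe_iff]
    exact hmin _ _ hr.profile htop

end
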